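/- Let n, k ≥ 1, N = n+k ≥ 3, and let q be an indeterminate. Consider the operators u_1,…,u_N acting both on F_k (basis W_{k,N}, k particles) and on F_n (basis W_{n,N}, n particles), defined by the same formulas. Then for all λ, μ, ρ ∈ 𝔓_{≤k,n} one has the level-rank duality ⟨w(ρ), s_λ(𝒰)·w(μ)⟩_{F_k} = ⟨w(ρ^t), s_{λ^t}(𝒰)·w(μ^t)⟩_{F_n} as elements of ℂ[q], where λ^t, μ^t, ρ^t ∈ 𝔓_{≤n,k} and w(·) on the right denotes the 01-word in W_{n,N} associated to a partition in 𝔓_{≤n,k}. -/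

import Mathlib

noncomputable section

open scoped BigOperators

/-- `𝔓_{≤r,c}`: partitions with at most `r` parts, each part at most `c`. -/
abbrev PartBox (r c : ℕ) :=
  {f : Fin r → Fin (c + 1) // ∀ i j : Fin r, i ≤ j → (f j : ℕ) ≤ (f i : ℕ)}

/-- The parts of a partition, as natural numbers. -/
def partVal {r c : ℕ} (σ : PartBox r c) (i : Fin r) : ℕ := (σ.1 i : ℕ)

/-- `|σ|`, the number of boxes. -/
def partSum {r c : ℕ} (σ : PartBox r c) : ℕ := ∑ i, partVal σ i

/-- A tuple of parts, padded by zeros. -/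
def padded {r : ℕ} (f : Fin r → ℕ) (t : ℕ) : ℕ := if h : t < r then f ⟨t, h⟩ else 0

/-- The transpose partition: `(transpGen μ c) j = μ^t_{j+1} = #{i | μ_i ≥ j+1}`. -/
def transpGen {r : ℕ} (μ : Fin r → ℕ) (c : ℕ) : Fin c → ℕ :=
  fun j => (Finset.univ.filter fun i : Fin r => (j : ℕ) + 1 ≤ μ i).card

/-- `I^{(m)}(τ)_j = (m+1)/2 + τ_{m+1-j} - (m+1-j)` (1-based `j`), as a rational number. -/
def Imap (m : ℕ) (τ : Fin m → ℕ) (j : Fin m) : ℚ :=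
  ((m : ℚ) + 1) / 2 + (τ j.rev : ℚ) - ((m : ℚ) - (j : ℚ))

/-- `ζ^t = exp(2πι t/N)` for rational exponents `t`. -/
def zeta (N : ℕ) (t : ℚ) : ℂ :=
  Complex.exp (2 * Real.pi * Complex.I * (t : ℂ) / (N : ℂ))

/-- Elementary symmetric polynomial `e_r(x)` of a tuple of complex numbers. -/
def eC {m : ℕ} (x : Fin m → ℂ) (r : ℤ) : ℂ :=
  if 0 ≤ r then ∑ I ∈ Finset.powersetCard r.toNat (Finset.univ : Finset (Fin m)), ∏ i ∈ I, x i
  else 0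

/-- Complete homogeneous symmetric polynomial `h_r(x)` of a tuple of complex numbers. -/
def hC {m : ℕ} (x : Fin m → ℂ) (r : ℤ) : ℂ :=
  if 0 ≤ r then
    ∑ p ∈ (Fintype.piFinset fun _ : Fin m => Finset.range (r.toNat + 1)).filter
        (fun p => ∑ i, p i = r.toNat),
      ∏ i, x i ^ p i
  else 0

/-- The Schur polynomial `s_λ(x) = det(h_{λ_i-i+j}(x))_{1 ≤ i,j ≤ m}`. -/
def schurC {m : ℕ} (x : Fin m → ℂ) (lam : Fin m → ℕ) : ℂ :=
  (Matrix.of fun i j : Fin m => hC x ((lam i : ℤ) - (i : ℕ) + (j : ℕ))).det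

/-- A canonical "gap" of a proper subset `I ⊊ ℤ/Nℤ`. -/
def zgap {N : ℕ} [NeZero N] (I : Finset (ZMod N)) : ZMod N :=
  if h : ((Finset.univ \ I).image ZMod.val).Nonempty then
    ((((Finset.univ \ I).image ZMod.val).min' h : ℕ) : ZMod N)
  else 0

/-- Cyclically increasing ordered product: `u_i` stands to the left of `u_{i+1}`. -/
def cycProdAsc {N : ℕ} [NeZero N] {A : Type*} [Monoid A] (u : ZMod N → A)
    (I : Finset (ZMod N)) : A :=
  ((List.range N).map fun t =>
    if zgap I + 1 + (t : ZMod N) ∈ I then u (zgap I + 1 + (t : ZMod N)) else 1).prod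

/-- Cyclically decreasing ordered product: `u_{i+1}` stands to the left of `u_i`. -/
def cycProdDesc {N : ℕ} [NeZero N] {A : Type*} [Monoid A] (u : ZMod N → A)
    (I : Finset (ZMod N)) : A :=
  ((List.range N).map fun t =>
    if zgap I - 1 - (t : ZMod N) ∈ I then u (zgap I - 1 - (t : ZMod N)) else 1).prod

/-- The determinant of a square matrix over a (possibly noncommutative) ring, expanded via
the Leibniz formula. -/
def ncDet {A : Type*} [Ring A] {r : ℕ} (M : Fin r → Fin r → A) : A :=
  ∑ σ : Equiv.Perm (Fin r),
    ((Equiv.Perm.sign σ : ℤ) : A) * ((List.finRange r).map fun i => M (σ i) i).prod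

/-- The free `R`-module with basis the set of 01-words of length `N` (a word is a function
`ℤ/Nℤ → Bool`, the 1-based position `ℓ` being encoded as `ℓ mod N`). -/
abbrev WSp (R : Type*) [CommRing R] (N : ℕ) := (ZMod N → Bool) →₀ R

/-- The 01-word `w(λ) ∈ W_{k,N}` of a partition `λ ∈ 𝔓_{≤k,n}`: the 1-letters occupy the
positions `ℓ_i = λ_{k+1-i} + i`, `i = 1, …, k`. -/
def wordOf (N k : ℕ) (lam : Fin k → ℕ) : ZMod N → Bool :=
  fun p => decide (∃ i : Fin k, p = ((lam i.rev + (i : ℕ) + 1 : ℕ) : ZMod N))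

/-- The hopping operator `u_c` (for `c = i mod N` this is the operator `u_i`, `1 ≤ i ≤ N`):
it moves a particle from position `c` to position `c+1` when possible (sends the word to 0
otherwise), with the extra factor `q` for `u_N` (i.e. `c = 0`). -/
def uOp (R : Type*) [CommRing R] (N : ℕ) [NeZero N] (q : R) (c : ZMod N) :
    Module.End R (WSp R N) :=
  Finsupp.lift (WSp R N) R (ZMod N → Bool) fun w =>
    if w c = true ∧ w (c + 1) = false then
      Finsupp.single (w ∘ (Equiv.swap c (c + 1))) (if c = 0 then q else 1)
    else 0

/-- The noncommutative elementary symmetric polynomials `e_t(𝒰)`, with the conventions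
`e_0 = id` and `e_t = 0` for `t < 0`. -/
def eUInt (R : Type*) [CommRing R] (N : ℕ) [NeZero N] (q : R) (t : ℤ) :
    Module.End R (WSp R N) :=
  if t = 0 then 1
  else if 1 ≤ t ∧ t ≤ (N : ℤ) - 1 then
    ∑ I ∈ Finset.powersetCard t.toNat (Finset.univ : Finset (ZMod N)),
      cycProdAsc (uOp R N q) I
  else 0

/-- The noncommutative complete symmetric polynomial `h_r(𝒰)`. -/
def hUOp (R : Type*) [CommRing R] (N : ℕ) [NeZero N] (q : R) (r : ℕ) :
    Module.End R (WSp R N) :=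
  ∑ I ∈ Finset.powersetCard r (Finset.univ : Finset (ZMod N)), cycProdDesc (uOp R N q) I

/-- The noncommutative Schur polynomial
`s_λ(𝒰) = det(e_{λ^t_i - i + j}(𝒰))_{1 ≤ i,j ≤ λ_1}` of a partition given by its parts. -/
def sUOp (R : Type*) [CommRing R] (N : ℕ) [NeZero N] (q : R) {r : ℕ} (lam : Fin r → ℕ) :
    Module.End R (WSp R N) :=
  ncDet fun i j : Fin (padded lam 0) =>
    eUInt R N q ((transpGen lam (padded lam 0) i : ℤ) - ((i : ℕ) : ℤ) + ((j : ℕ) : ℤ))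

/-- The `R`-bilinear pairing on the word space making the basis of words orthonormal. -/
def pairW {R : Type*} [CommRing R] {N : ℕ} [NeZero N] (f g : WSp R N) : R :=
  ∑ w : ZMod N → Bool, f w * g w

/-!
Reflecting `ℤ/Nℤ` and exchanging the two letters identifies `F_k` with `F_n`, sends `w(μ)` to
`w(μ^t)` (the 0-letters of a word are governed by the transposed partition) and conjugates `u_c`
into `u_{-c}`.  This reverses the cyclic order in the products defining `e_r(𝒰)`, hence turns
`e_r(𝒰)` into the complete homogeneous `h_r(𝒰)`, the same sum with decreasing products.  So
level-rank duality amounts to the Jacobi–Trudi identity `det e_{λ^t_i-i+j}(𝒰) = det h_{λ_i-i+j}(𝒰)`.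

That identity holds for any two sequences in a commutative ring which are inverse to each other
up to signs.  Here the relation `∑ (-1)^r e_{m-r}(𝒰) h_r(𝒰) = 0` for `0 < m < N` comes from a
sign-reversing involution, using only `u_c ^ 2 = 0` and the commutation of distant `u_c`, and the
`e_r(𝒰)` commute because their generating function is a transfer matrix satisfying a Yang–Baxter
exchange relation.
-/

/-! ### Cyclically ordered products -/

section Exchange

variable {α : Type*} [DecidableEq α] {m : α} {p : Finset α × Finset α}

/-- Exchange the membership of `m` between the two components of a pair of finite sets. -/
def exchangeMem (m : α) (p : Finset α × Finset α) : Finset α × Finset α :=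
  (if m ∈ p.2 then insert m p.1 else p.1.erase m,
    if m ∈ p.1 then insert m p.2 else p.2.erase m)

theorem exchangeMem_exchangeMem (m : α) (p : Finset α × Finset α) :
    exchangeMem m (exchangeMem m p) = p := by
  ext <;> grind [exchangeMem]

theorem exchangeMem_union (hm : m ∈ p.1 ∪ p.2) :
    (exchangeMem m p).1 ∪ (exchangeMem m p).2 = p.1 ∪ p.2 := by
  ext; grind [exchangeMem]

theorem mem_and_mem_of_exchangeMem_eq (hm : m ∈ p.1 ∪ p.2) (h : exchangeMem m p = p) :
    m ∈ p.1 ∧ m ∈ p.2 := by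
  rw [exchangeMem, Prod.ext_iff] at h
  grind

theorem card_exchangeMem (m : α) (p : Finset α × Finset α) :
    (exchangeMem m p).1.card + (exchangeMem m p).2.card = p.1.card + p.2.card := by
  grind [exchangeMem, Finset.erase_eq_of_notMem]

end Exchange

section CyclicProduct

open scoped Pointwise
open Finset.HasAntidiagonal (antidiagonal)

variable {N : ℕ} {A : Type*}

/-- A family indexed by `ℤ/Nℤ` in which members at distinct, non-adjacent places commute. -/
def FarCommute [Mul A] (u : ZMod N → A) : Prop :=
  ∀ x y, y ≠ x → y ≠ x + 1 → x ≠ y + 1 → Commute (u x) (u y)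

theorem natCast_ne_zero_of_lt {m : ℕ} (hm : 0 < m) (hmN : m < N) : (m : ZMod N) ≠ 0 := fun h =>
  (Nat.le_of_dvd hm ((ZMod.natCast_eq_zero_iff m N).mp h)).not_gt hmN

theorem FarCommute.comp_neg [Mul A] {u : ZMod N → A} (hu : FarCommute u) :
    FarCommute fun x => u (-x) := by
  refine fun x y h₀ h₁ h₂ => hu _ _ (fun h => h₀ (neg_injective h)) (fun h => h₂ ?_)
    fun h => h₁ ?_
  · linear_combination h
  · linear_combination h

theorem FarCommute.commute_add [Mul A] {u : ZMod N → A} (hu : FarCommute u) (x : ZMod N) {e : ℕ}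
    (he : 1 < e) (heN : e + 1 < N) : Commute (u x) (u (x + e)) := by
  refine hu _ _ (fun h => ?_) (fun h => ?_) fun h => ?_
  · refine natCast_ne_zero_of_lt (N := N) (m := e) (by omega) (by omega) ?_
    linear_combination h
  · refine natCast_ne_zero_of_lt (N := N) (m := e - 1) (by omega) (by omega) ?_
    push_cast [he.le]
    linear_combination h
  · refine natCast_ne_zero_of_lt (N := N) (m := e + 1) (by omega) heN ?_
    push_cast
    linear_combination -h

/-- The `d` cyclically consecutive residues `g + 1, …, g + d`. -/
def arc (g : ZMod N) (d : ℕ) : List (ZMod N) :=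
  (List.range d).map fun t : ℕ => g + 1 + (t : ZMod N)

theorem mem_arc {g x : ZMod N} {d : ℕ} : x ∈ arc g d ↔ ∃ t < d, g + 1 + (t : ZMod N) = x := by
  simp [arc]

theorem arc_add (g : ZMod N) (d e : ℕ) : arc g (d + e) = arc g d ++ arc (g + (d : ZMod N)) e := by
  rw [arc, List.range_add, List.map_append, List.map_map, arc, arc, List.append_cancel_left_eq]
  refine List.map_congr_left fun t _ => ?_
  simp only [Function.comp_apply, Nat.cast_add]
  ring

theorem arc_one (g : ZMod N) : arc g 1 = [g + 1] := by simp [arc]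

theorem notMem_arc {g : ZMod N} {d : ℕ} (hd : d < N) : g ∉ arc g d := by
  rw [mem_arc]
  rintro ⟨t, ht, h⟩
  refine natCast_ne_zero_of_lt (N := N) t.succ_pos (by omega) ?_
  push_cast
  linear_combination h

theorem exists_add_of_mem_arc {g x y : ZMod N} {d : ℕ} (hx : x ∈ arc g d) (hxd : x ≠ g + d)
    (hy : y ∈ arc (g + (d : ZMod N)) (N - d)) (hyg : y ≠ g) :
    ∃ e : ℕ, 1 < e ∧ e + 1 < N ∧ y = x + e := by
  obtain ⟨s, hs, rfl⟩ := mem_arc.mp hx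
  obtain ⟨t, ht, rfl⟩ := mem_arc.mp hy
  have hsd : s + 1 ≠ d := by
    rintro rfl
    exact hxd (by push_cast; ring)
  have htN : d + t + 1 ≠ N := by
    intro h
    have hN : ((d + t + 1 : ℕ) : ZMod N) = 0 := by rw [h, ZMod.natCast_self]
    refine hyg ?_
    push_cast at hN
    linear_combination hN
  refine ⟨d + t - s, by omega, by omega, ?_⟩
  rw [Nat.cast_sub (by omega)]
  push_cast
  ring

theorem ne_univ_of_notMem [NeZero N] {I : Finset (ZMod N)} {x : ZMod N} (hx : x ∉ I) :
    I ≠ Finset.univ :=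
  fun h => hx (h ▸ Finset.mem_univ x)

section Monoid

variable [Monoid A] {u : ZMod N → A} {I : Finset (ZMod N)} {g m : ZMod N}

theorem FarCommute.commute_prod_arc (hu : FarCommute u) {d : ℕ} (hg : g ∉ I) (hgd : g + d ∉ I) :
    Commute ((arc g d).map (I.piecewise u 1)).prod
      ((arc (g + (d : ZMod N)) (N - d)).map (I.piecewise u 1)).prod := by
  refine Commute.list_prod_left _ _ fun a ha => Commute.list_prod_right _ _ fun b hb => ?_
  obtain ⟨x, hx, rfl⟩ := List.mem_map.mp ha
  obtain ⟨y, hy, rfl⟩ := List.mem_map.mp hb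
  by_cases hxI : x ∈ I
  · by_cases hyI : y ∈ I
    · obtain ⟨e, he, heN, rfl⟩ := exists_add_of_mem_arc hx (ne_of_mem_of_not_mem hxI hgd) hy
        (ne_of_mem_of_not_mem hyI hg)
      simpa only [Finset.piecewise_eq_of_mem _ _ _ hxI, Finset.piecewise_eq_of_mem _ _ _ hyI]
        using hu.commute_add x he heN
    · simp [hyI]
  · simp [hxI]

theorem prod_map_piecewise_insert {l : List (ZMod N)} (hm : m ∉ l) :
    (l.map ((insert m I).piecewise u 1)).prod = (l.map (I.piecewise u 1)).prod := by
  congr 1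
  refine List.map_congr_left fun x hx => ?_
  exact Finset.piecewise_insert_of_ne _ _ _ (ne_of_mem_of_not_mem hx hm)

variable [NeZero N]

theorem zgap_notMem (hI : I ≠ Finset.univ) : zgap I ∉ I := by
  have h : ((Finset.univ \ I).image ZMod.val).Nonempty := by
    rw [Finset.image_nonempty, Finset.sdiff_nonempty]
    exact fun h => hI (Finset.univ_subset_iff.mp h)
  obtain ⟨x, hx, hxg⟩ := Finset.mem_image.mp (Finset.min'_mem _ h)
  rw [zgap, dif_pos h, ← hxg, ZMod.natCast_zmod_val]
  exact (Finset.mem_sdiff.mp hx).2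

/-- Moving the gap rotates the arc, which swaps two blocks without adjacent places. -/
theorem FarCommute.prod_arc_eq (hu : FarCommute u) {g' : ZMod N} (hg : g ∉ I) (hg' : g' ∉ I) :
    ((arc g N).map (I.piecewise u 1)).prod = ((arc g' N).map (I.piecewise u 1)).prod := by
  obtain ⟨d, hd, rfl⟩ : ∃ d < N, g' = g + (d : ℕ) :=
    ⟨(g' - g).val, ZMod.val_lt _, by rw [ZMod.natCast_zmod_val]; ring⟩
  have hsplit : arc g N = arc g d ++ arc (g + (d : ZMod N)) (N - d) := by
    rw [← arc_add, Nat.add_sub_cancel' hd.le]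
  have hrotate : arc (g + (d : ZMod N)) N =
      arc (g + (d : ZMod N)) (N - d) ++ arc g d := by
    have := arc_add (g + (d : ZMod N)) (N - d) d
    rwa [Nat.sub_add_cancel hd.le, Nat.cast_sub hd.le, ZMod.natCast_self, zero_sub,
      add_neg_cancel_right] at this
  simp only [hsplit, hrotate, List.map_append, List.prod_append, (hu.commute_prod_arc hg hg').eq]

-- The casts of `List.range N` in `cycProdAsc` elaborate to monadic lifts.
theorem cycProdAsc_eq_prod_arc_zgap (u : ZMod N → A) (I : Finset (ZMod N)) :
    cycProdAsc u I = ((arc (zgap I) N).map (I.piecewise u 1)).prod := by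
  simp only [cycProdAsc, arc, List.bind_eq_flatMap, List.pure_def, ← List.map_eq_flatMap,
    List.map_map]
  rfl

theorem FarCommute.cycProdAsc_eq (hu : FarCommute u) (hg : g ∉ I) :
    cycProdAsc u I = ((arc g N).map (I.piecewise u 1)).prod := by
  rw [cycProdAsc_eq_prod_arc_zgap]
  exact hu.prod_arc_eq (zgap_notMem (ne_univ_of_notMem hg)) hg

@[simp]
theorem cycProdAsc_empty (u : ZMod N → A) : cycProdAsc u ∅ = 1 := by
  rw [cycProdAsc_eq_prod_arc_zgap]
  exact List.prod_eq_one (by simp)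

theorem FarCommute.cycProdAsc_insert_of_sub_one_notMem (hu : FarCommute u) (hm : m ∉ I)
    (hm' : m - 1 ∉ insert m I) : cycProdAsc u (insert m I) = u m * cycProdAsc u I := by
  have harc : arc (m - 1) N = m :: arc m (N - 1) := by
    have := arc_add (m - 1) 1 (N - 1)
    rwa [Nat.add_sub_cancel' NeZero.one_le, arc_one, Nat.cast_one, sub_add_cancel,
      List.singleton_append] at this
  rw [hu.cycProdAsc_eq hm', hu.cycProdAsc_eq (fun h => hm' (Finset.mem_insert_of_mem h)), harc]
  simp only [List.map_cons, List.prod_cons, Finset.piecewise_insert_self]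
  rw [prod_map_piecewise_insert (notMem_arc (Nat.sub_lt NeZero.one_le zero_lt_one)),
    Finset.piecewise_eq_of_notMem _ _ _ hm, Pi.one_apply, one_mul]

theorem FarCommute.cycProdAsc_insert_of_add_one_notMem (hu : FarCommute u) (hm : m ∉ I)
    (hm' : m + 1 ∉ insert m I) : cycProdAsc u (insert m I) = cycProdAsc u I * u m := by
  obtain ⟨M, rfl⟩ : ∃ M, N = M + 2 := by
    refine ⟨N - 2, (Nat.sub_add_cancel ?_).symm⟩
    by_contra! hN
    have hN1 : N = 1 := by have := NeZero.one_le (n := N); omega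
    subst hN1
    exact hm' (Finset.mem_insert.mpr (Or.inl (Subsingleton.elim _ _)))
  have hM : (M : ZMod (M + 2)) = -2 := by
    have := ZMod.natCast_self (M + 2)
    push_cast at this
    linear_combination this
  have harc : arc (m + 1) (M + 2) = arc (m + 1) M ++ [m, m + 1] := by
    have h₁ : m + 1 + -2 + 1 = m := by ring
    have h₂ : m + 1 + (-2 + 1) + 1 = m + 1 := by ring
    rw [arc_add _ (M + 1) 1, arc_add _ M 1, arc_one, arc_one, Nat.cast_add, Nat.cast_one, hM, h₁,
      h₂, List.append_assoc, List.singleton_append]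
  have hmarc : m ∉ arc (m + 1) M := by
    have h := notMem_arc (g := m) (show 1 + M < M + 2 by omega)
    rw [arc_add, arc_one, Nat.cast_one] at h
    exact fun h' => h (List.mem_append_right _ h')
  have hm1 : m + 1 ∉ I := fun h => hm' (Finset.mem_insert_of_mem h)
  rw [hu.cycProdAsc_eq hm', hu.cycProdAsc_eq hm1, harc]
  simp [prod_map_piecewise_insert hmarc, hm, hm1, hm']

theorem FarCommute.cycProdDesc_eq (hu : FarCommute u) (hI : I ≠ Finset.univ) :
    cycProdDesc u I = cycProdAsc (fun x => u (-x)) (-I) := by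
  have hgap : -zgap I ∉ -I := by simpa using zgap_notMem hI
  rw [hu.comp_neg.cycProdAsc_eq hgap, cycProdDesc, arc]
  simp only [List.bind_eq_flatMap, List.pure_def, ← List.map_eq_flatMap, List.map_map]
  congr 1
  refine List.map_congr_left fun t _ => ?_
  have ht : -(-zgap I + 1 + (t : ZMod N)) = zgap I - 1 - t := by ring
  simp only [Function.comp_apply, Finset.piecewise, Finset.mem_neg', ht, Pi.one_apply]

theorem FarCommute.cycProdDesc_insert_of_add_one_notMem (hu : FarCommute u) (hm : m ∉ I)
    (hm' : m + 1 ∉ insert m I) : cycProdDesc u (insert m I) = u m * cycProdDesc u I := by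
  have hneg : -(insert m I) = insert (-m) (-I) := by ext; simp
  rw [hu.cycProdDesc_eq (ne_univ_of_notMem hm'),
    hu.cycProdDesc_eq (ne_univ_of_notMem hm), hneg,
    hu.comp_neg.cycProdAsc_insert_of_sub_one_notMem (by simpa using hm), neg_neg]
  have h : -m - 1 = -(m + 1) := by ring
  rwa [← hneg, h, Finset.mem_neg', neg_neg]

theorem map_cycProdAsc {B F : Type*} [Monoid B] [FunLike F A B] [MonoidHomClass F A B] (φ : F)
    (u : ZMod N → A) (I : Finset (ZMod N)) :
    φ (cycProdAsc u I) = cycProdAsc (fun x => φ (u x)) I := by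
  rw [cycProdAsc, cycProdAsc, map_list_prod, List.map_map]
  congr 1
  refine List.map_congr_left fun t _ => ?_
  simp only [Function.comp_apply, apply_ite φ, map_one]

theorem exists_mem_add_one_notMem {K : Finset (ZMod N)} (hK : K.Nonempty) (hK' : K ≠ Finset.univ) :
    ∃ m ∈ K, m + 1 ∉ K := by
  by_contra! hadd
  obtain ⟨x, hx⟩ := hK
  have hmem : ∀ t : ℕ, x + t ∈ K := fun t => by
    induction t with
    | zero => simpa
    | succ t ih => simpa [add_assoc] using hadd _ ih
  refine hK' (Finset.eq_univ_of_forall fun y => ?_)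
  simpa using hmem (y - x).val

end Monoid

section Ring

variable [Ring A] [NeZero N] {u : ZMod N → A} {I J : Finset (ZMod N)} {m : ZMod N}

/-- The elementary symmetric polynomial in cyclically ordered variables: the sum of the ascending
products over the proper subsets of `ℤ/Nℤ` with `r` elements; it vanishes unless `0 ≤ r < N`. -/
def cyclicE (u : ZMod N → A) (r : ℤ) : A :=
  ∑ I ∈ Finset.univ.ssubsets with (I.card : ℤ) = r, cycProdAsc u I

/-- The complete symmetric polynomial in cyclically ordered variables with vanishing squares: the
sum of the descending products over the proper subsets of `ℤ/Nℤ` with `r` elements. -/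
def cyclicH (u : ZMod N → A) (r : ℤ) : A :=
  ∑ I ∈ Finset.univ.ssubsets with (I.card : ℤ) = r, cycProdDesc u I

theorem FarCommute.cycProdAsc_insert_mul_cycProdDesc (hu : FarCommute u) (hmI : m ∉ I)
    (hmJ : m ∉ J) (hI : m + 1 ∉ insert m I) (hJ : m + 1 ∉ insert m J) :
    cycProdAsc u (insert m I) * cycProdDesc u J = cycProdAsc u I * cycProdDesc u (insert m J) := by
  rw [hu.cycProdAsc_insert_of_add_one_notMem hmI hI,
    hu.cycProdDesc_insert_of_add_one_notMem hmJ hJ, mul_assoc]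

theorem FarCommute.cycProdAsc_mul_cycProdDesc_eq_zero (hu : FarCommute u) (hsq : u m * u m = 0)
    (hmI : m ∈ I) (hmJ : m ∈ J) (hI : m + 1 ∉ I) (hJ : m + 1 ∉ J) :
    cycProdAsc u I * cycProdDesc u J = 0 := by
  rw [← Finset.insert_erase hmI] at hI ⊢
  rw [← Finset.insert_erase hmJ] at hJ ⊢
  rw [hu.cycProdAsc_insert_of_add_one_notMem (Finset.notMem_erase m I) hI,
    hu.cycProdDesc_insert_of_add_one_notMem (Finset.notMem_erase m J) hJ, mul_assoc,
    ← mul_assoc (u m), hsq, zero_mul, mul_zero]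

/-- A sign-reversing involution: exchanging an element `m` of `I ∪ J` such that `m + 1 ∉ I ∪ J`
leaves the product unchanged if `m` lies in only one of the two sets; otherwise the product is `0`,
as `u m * u m = 0`. -/
theorem FarCommute.cycProdAsc_mul_cycProdDesc_exchangeMem (hu : FarCommute u)
    (hsq : u m * u m = 0) {p : Finset (ZMod N) × Finset (ZMod N)} (hm : m ∈ p.1 ∪ p.2)
    (hm' : m + 1 ∉ p.1 ∪ p.2) :
    (-1) ^ p.2.card * (cycProdAsc u p.1 * cycProdDesc u p.2) +
      (-1) ^ (exchangeMem m p).2.card *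
        (cycProdAsc u (exchangeMem m p).1 * cycProdDesc u (exchangeMem m p).2) = 0 := by
  obtain ⟨I, J⟩ := p
  obtain ⟨hI', hJ'⟩ : m + 1 ∉ I ∧ m + 1 ∉ J := by simpa using hm'
  have cancel : ∀ {I J : Finset (ZMod N)}, m ∉ I → m ∉ J → m + 1 ∉ insert m I →
      m + 1 ∉ insert m J →
      (-1) ^ (insert m J).card * (cycProdAsc u I * cycProdDesc u (insert m J)) +
        (-1) ^ J.card * (cycProdAsc u (insert m I) * cycProdDesc u J) = 0 := by
    intro I J hI hJ hI' hJ'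
    rw [hu.cycProdAsc_insert_mul_cycProdDesc hI hJ hI' hJ', Finset.card_insert_of_notMem hJ,
      pow_succ, mul_neg_one, neg_mul, neg_add_cancel]
  have hm_ne : m + 1 ≠ m := fun h => hm' (h.symm ▸ hm)
  by_cases hI : m ∈ I <;> by_cases hJ : m ∈ J
  · simp [exchangeMem, hI, hJ, hu.cycProdAsc_mul_cycProdDesc_eq_zero hsq hI hJ hI' hJ']
  · have := cancel (Finset.notMem_erase m I) hJ (by rwa [Finset.insert_erase hI])
      (by simp [hm_ne, hJ'])
    rw [add_comm]
    simpa only [exchangeMem, hI, hJ, if_true, if_false, Finset.insert_erase] using this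
  · have := cancel hI (Finset.notMem_erase m J) (by simp [hm_ne, hI'])
      (by rwa [Finset.insert_erase hJ])
    simpa only [exchangeMem, hI, hJ, if_true, if_false, Finset.insert_erase] using this
  · simp [hI, hJ] at hm

/-- The pairs of subsets with `r` elements in total are matched up by exchanging the pivot, an
element of their union whose successor is outside; one exists as the union is a proper subset. -/
theorem FarCommute.sum_cycProdAsc_mul_cycProdDesc (hu : FarCommute u) (hsq : ∀ x, u x * u x = 0)
    {r : ℕ} (hr : 0 < r) (hrN : r < N) :
    ∑ p : Finset (ZMod N) × Finset (ZMod N) with p.1.card + p.2.card = r,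
      (-1) ^ p.2.card * (cycProdAsc u p.1 * cycProdDesc u p.2) = 0 := by
  have hpivot : ∀ K : Finset (ZMod N), K.Nonempty ∧ K ≠ Finset.univ → ∃ m ∈ K, m + 1 ∉ K :=
    fun K hK => exists_mem_add_one_notMem hK.1 hK.2
  choose! pivot pivot_mem pivot_add_one using hpivot
  have hproper : ∀ p ∈ ({p | p.1.card + p.2.card = r} : Finset (Finset (ZMod N) × Finset (ZMod N))),
      (p.1 ∪ p.2).Nonempty ∧ p.1 ∪ p.2 ≠ Finset.univ := by
    intro p hp
    rw [Finset.mem_filter_univ] at hp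
    refine ⟨?_, fun hK => ?_⟩
    · rw [Finset.union_nonempty, ← Finset.card_pos, ← Finset.card_pos]
      omega
    · have := Finset.card_union_le p.1 p.2
      rw [hK, Finset.card_univ, ZMod.card] at this
      omega
  refine Finset.sum_involution (fun p _ => exchangeMem (pivot (p.1 ∪ p.2)) p) (fun p hp => ?_)
    (fun p hp hne heq => hne ?_) (fun p hp => ?_) fun p hp => ?_
  · exact hu.cycProdAsc_mul_cycProdDesc_exchangeMem (hsq _) (pivot_mem _ (hproper p hp))
      (pivot_add_one _ (hproper p hp))
  · obtain ⟨h₁, h₂⟩ := mem_and_mem_of_exchangeMem_eq (pivot_mem _ (hproper p hp)) heq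
    obtain ⟨h₁', h₂'⟩ := not_or.mp (Finset.mem_union.not.mp (pivot_add_one _ (hproper p hp)))
    rw [hu.cycProdAsc_mul_cycProdDesc_eq_zero (hsq _) h₁ h₂ h₁' h₂', mul_zero]
  · simpa [card_exchangeMem] using hp
  · simp only [exchangeMem_union (pivot_mem _ (hproper p hp)), exchangeMem_exchangeMem]

theorem cyclicE_natCast_mul_cyclicH_natCast (u : ZMod N → A) {i j : ℕ} (hi : i < N) (hj : j < N) :
    cyclicE u i * cyclicH u j =
      ∑ p : Finset (ZMod N) × Finset (ZMod N) with (p.1.card, p.2.card) = (i, j),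
        cycProdAsc u p.1 * cycProdDesc u p.2 := by
  rw [cyclicE, cyclicH, Finset.sum_mul_sum, ← Finset.sum_product']
  refine Finset.sum_congr (Finset.ext fun p => ?_) fun p _ => rfl
  have hproper : ∀ I : Finset (ZMod N), I.card < N → I ≠ Finset.univ := by
    rintro _ hI rfl
    simp [ZMod.card] at hI
  simp only [Finset.mem_product, Finset.mem_filter, Finset.mem_ssubsets, Finset.ssubset_univ_iff,
    Nat.cast_inj, Finset.mem_univ, true_and, Prod.mk.injEq]
  refine ⟨fun h => ⟨h.1.2, h.2.2⟩, ?_⟩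
  rintro ⟨rfl, rfl⟩
  exact ⟨⟨hproper _ hi, rfl⟩, hproper _ hj, rfl⟩

theorem FarCommute.sum_antidiagonal_cyclicE_mul_cyclicH (hu : FarCommute u)
    (hsq : ∀ x, u x * u x = 0) {r : ℕ} (hr : 0 < r) (hrN : r < N) :
    ∑ p ∈ antidiagonal r, (-1) ^ p.2 * (cyclicE u p.1 * cyclicH u p.2) = 0 := by
  rw [← hu.sum_cycProdAsc_mul_cycProdDesc hsq hr hrN]
  have hmaps : ∀ p ∈ ({p | p.1.card + p.2.card = r} : Finset (Finset (ZMod N) × Finset (ZMod N))),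
      (p.1.card, p.2.card) ∈ antidiagonal r := by simp
  rw [← Finset.sum_fiberwise_of_maps_to hmaps]
  refine Finset.sum_congr rfl fun ⟨i, j⟩ hij => ?_
  rw [Finset.HasAntidiagonal.mem_antidiagonal] at hij
  rw [cyclicE_natCast_mul_cyclicH_natCast u (by omega) (by omega), Finset.mul_sum,
    Finset.filter_filter]
  refine Finset.sum_congr (Finset.ext fun p => ?_) fun p hp => ?_
  · grind
  · rw [Finset.mem_filter_univ, Prod.mk.injEq] at hp
    rw [hp.2.2]

theorem cyclicE_zero (u : ZMod N → A) : cyclicE u 0 = 1 := by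
  have hempty : ({I ∈ Finset.univ.ssubsets | (I.card : ℤ) = 0} : Finset (Finset (ZMod N))) =
      {∅} := by
    ext I
    simp only [Finset.mem_filter, Nat.cast_eq_zero, Finset.card_eq_zero, Finset.mem_singleton,
      and_iff_right_iff_imp]
    rintro rfl
    exact Finset.empty_mem_ssubsets Finset.univ_nonempty
  rw [cyclicE, hempty, Finset.sum_singleton, cycProdAsc_empty]

theorem cyclicE_of_neg (u : ZMod N → A) {r : ℤ} (hr : r < 0) : cyclicE u r = 0 := by
  refine Finset.sum_eq_zero fun I hI => ?_
  simp only [Finset.mem_filter] at hI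
  omega

theorem cyclicE_of_le (u : ZMod N → A) {r : ℤ} (hr : (N : ℤ) ≤ r) : cyclicE u r = 0 := by
  refine Finset.sum_eq_zero fun I hI => ?_
  rw [Finset.mem_filter, Finset.mem_ssubsets] at hI
  have := Finset.card_lt_card hI.1
  rw [Finset.card_univ, ZMod.card] at this
  omega

theorem FarCommute.cyclicE_comp_neg (hu : FarCommute u) (r : ℤ) :
    cyclicE (fun x => u (-x)) r = cyclicH u r := by
  refine Finset.sum_equiv (Equiv.neg _) (fun I => ?_) fun I hI => ?_
  · simp [Finset.ssubset_univ_iff, neg_eq_iff_eq_neg]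
  · rw [Finset.mem_filter, Finset.mem_ssubsets, Finset.ssubset_univ_iff] at hI
    have hI' : -I ≠ Finset.univ := by simpa [neg_eq_iff_eq_neg] using hI.1
    rw [Equiv.neg_apply, hu.cycProdDesc_eq hI', neg_neg]

end Ring
end CyclicProduct

/-! ### Hopping operators -/

section Hopping

variable {R : Type*} [CommRing R] {N : ℕ} {q : R} {I : Finset (ZMod N)} {w : ZMod N → Bool}

theorem properSubset_induction [NeZero N] {P : (I : Finset (ZMod N)) → I ≠ Finset.univ → Prop}
    (empty : ∀ h, P ∅ h)
    (insert : ∀ m I (hm : m ∉ I) (_ : m + 1 ∉ insert m I) (h : insert m I ≠ Finset.univ),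
      P I (ne_univ_of_notMem hm) → P (insert m I) h)
    (I : Finset (ZMod N)) (hI : I ≠ Finset.univ) : P I hI := by
  induction h : I.card generalizing I with
  | zero =>
    obtain rfl := Finset.card_eq_zero.mp h
    exact empty hI
  | succ r ih =>
    obtain ⟨m, hm, hm'⟩ := exists_mem_add_one_notMem (Finset.card_pos.mp (by omega)) hI
    obtain ⟨J, hmJ, rfl⟩ : ∃ J, m ∉ J ∧ Insert.insert m J = I :=
      ⟨_, Finset.notMem_erase m I, Finset.insert_erase hm⟩
    refine insert m J hmJ hm' hI (ih J _ ?_)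
    rwa [Finset.card_insert_of_notMem hmJ, Nat.add_right_cancel_iff] at h

theorem WSp.end_ext {f g : Module.End R (WSp R N)}
    (h : ∀ w, f (Finsupp.single w 1) = g (Finsupp.single w 1)) : f = g :=
  Finsupp.lhom_ext' fun w => LinearMap.ext_ring (h w)

/-- The particles at the sites of `I` can each hop one step forward, a site of `I` being vacated
before the particle behind it moves in. -/
def CanHop (I : Finset (ZMod N)) (w : ZMod N → Bool) : Prop :=
  ∀ i ∈ I, w i = true ∧ (i + 1 ∈ I ∨ w (i + 1) = false)

/-- The word obtained from `w` when the particles at the sites of `I` hop one step forward. -/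
def hop (I : Finset (ZMod N)) (w : ZMod N → Bool) (p : ZMod N) : Bool :=
  if p - 1 ∈ I then true else if p ∈ I then false else w p

theorem canHop_insert {m : ZMod N} (hm : m ∉ I) (hm' : m + 1 ∉ insert m I) :
    CanHop (insert m I) w ↔
      (w m = true ∧ w (m + 1) = false) ∧ CanHop I (w ∘ Equiv.swap m (m + 1)) := by
  have hne : ∀ i ∈ I, i ≠ m ∧ i ≠ m + 1 ∧ i + 1 ≠ m + 1 := by grind
  simp only [CanHop, Finset.forall_mem_insert, Function.comp_apply, Equiv.swap_apply_def]
  grind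

theorem hop_insert {m : ZMod N} (hm' : m + 1 ∉ insert m I)
    (h : w m = true ∧ w (m + 1) = false) :
    hop (insert m I) w = hop I (w ∘ Equiv.swap m (m + 1)) := by
  have hsub : ∀ p : ZMod N, p - 1 = m ↔ p = m + 1 := fun p => sub_eq_iff_eq_add
  funext p
  simp only [hop, Function.comp_apply, Equiv.swap_apply_def, Finset.mem_insert, hsub]
  grind

variable [NeZero N]

theorem uOp_single (c : ZMod N) (w : ZMod N → Bool) (a : R) :
    uOp R N q c (Finsupp.single w a) =
      if w c = true ∧ w (c + 1) = false then
        Finsupp.single (w ∘ Equiv.swap c (c + 1)) (a * if c = 0 then q else 1)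
      else 0 := by
  rw [uOp, Finsupp.lift_apply, Finsupp.sum_single_index, smul_ite, smul_zero,
    Finsupp.smul_single, smul_eq_mul]
  exact zero_smul R _

theorem uOp_mul_self (c : ZMod N) : uOp R N q c * uOp R N q c = 0 := by
  refine WSp.end_ext fun w => ?_
  rw [Module.End.mul_apply, uOp_single, LinearMap.zero_apply]
  by_cases h : w c = true ∧ w (c + 1) = false
  · rw [if_pos h, uOp_single, if_neg]
    simp [h]
  · rw [if_neg h, map_zero]

theorem farCommute_uOp : FarCommute (uOp R N q) := by
  intro x y hyx hyx' hxy'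
  refine WSp.end_ext fun w => ?_
  have hs : ∀ {a b c : ZMod N}, c ≠ a → c ≠ b → Equiv.swap a b c = c :=
    fun h h' => Equiv.swap_apply_of_ne_of_ne h h'
  have hxy1 : y + 1 ≠ x + 1 := fun h => hyx (add_right_cancel h)
  have hcomm : (w ∘ Equiv.swap y (y + 1)) ∘ Equiv.swap x (x + 1) =
      (w ∘ Equiv.swap x (x + 1)) ∘ Equiv.swap y (y + 1) := by
    funext p
    grind
  simp only [Module.End.mul_apply, uOp_single, apply_ite (uOp R N q _), map_zero,
    Function.comp_apply, hs hyx hyx', hs hxy'.symm hxy1, hs hyx.symm hxy', hs hyx'.symm hxy1.symm,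
    hcomm, one_mul, mul_comm (ite (y = 0) q 1)]
  split_ifs <;> rfl

open Classical in
theorem cycProdAsc_uOp_single (hI : I ≠ Finset.univ) (a : R) :
    cycProdAsc (uOp R N q) I (Finsupp.single w a) =
      if CanHop I w then
        Finsupp.single (hop I w) (a * ∏ x ∈ I, if x = 0 then q else 1)
      else 0 := by
  induction I, hI using properSubset_induction generalizing w a with
  | empty =>
    have hop_empty : hop ∅ w = w := by
      funext p
      simp [hop]
    simp [cycProdAsc_empty, CanHop, hop_empty]
  | insert m I hm hm' _ ih =>
    rw [farCommute_uOp.cycProdAsc_insert_of_add_one_notMem hm hm', Module.End.mul_apply,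
      uOp_single, Finset.prod_insert hm]
    by_cases h : w m = true ∧ w (m + 1) = false
    · rw [if_pos h, ih, hop_insert hm' h, mul_assoc]
      exact if_congr ((canHop_insert hm hm').trans (and_iff_right h)).symm rfl rfl
    · rw [if_neg h, map_zero, if_neg fun h' => h ((canHop_insert hm hm').mp h').1]

theorem eUInt_eq_cyclicE (r : ℤ) : eUInt R N q r = cyclicE (uOp R N q) r := by
  rw [eUInt]
  split_ifs with h₀ h₁
  · rw [h₀, cyclicE_zero]
  · refine Finset.sum_congr (Finset.ext fun I => ?_) fun _ _ => rfl
    rw [Finset.mem_powersetCard_univ, Finset.mem_filter, Finset.mem_ssubsets,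
      Finset.ssubset_univ_iff, ← Finset.card_lt_iff_ne_univ, ZMod.card]
    omega
  · obtain h | h : r < 0 ∨ (N : ℤ) ≤ r := by omega
    · rw [cyclicE_of_neg (uOp R N q) h]
    · rw [cyclicE_of_le (uOp R N q) h]

end Hopping

/-! ### Transfer matrices -/

section CyclicTrace

open scoped Matrix

variable {R β : Type*} [CommRing R] [Fintype β] [DecidableEq β]

theorem prod_ofFn_mulVec {m : ℕ} (M : Fin m → Matrix β β R) (v : β → R) (a : β) :
    ((List.ofFn M).prod *ᵥ v) a =
      ∑ c : Fin m → β, (∏ i, M i ((Fin.cons a c : Fin (m + 1) → β) i.castSucc) (c i)) *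
        v ((Fin.cons a c : Fin (m + 1) → β) (Fin.last m)) := by
  induction m generalizing a with
  | zero => simp
  | succ m ih =>
    rw [List.ofFn_succ, List.prod_cons, ← Matrix.mulVec_mulVec, Matrix.mulVec, dotProduct,
      ← (Fin.consEquiv fun _ : Fin (m + 1) => β).sum_comp, Fintype.sum_prod_type]
    refine Finset.sum_congr rfl fun b _ => ?_
    rw [ih, Finset.mul_sum]
    refine Finset.sum_congr rfl fun c _ => ?_
    simp only [Fin.consEquiv_apply, Fin.prod_univ_succ, Fin.castSucc_zero, Fin.cons_zero,
      Fin.cons_succ, ← Fin.succ_castSucc, ← Fin.succ_last, mul_assoc]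

theorem trace_prod_ofFn {m : ℕ} (M : Fin (m + 1) → Matrix β β R) :
    (List.ofFn M).prod.trace = ∑ c : Fin (m + 1) → β, ∏ i, M i (c (i - 1)) (c i) := by
  have hdiag : ∀ a, (List.ofFn M).prod a a = ((List.ofFn M).prod *ᵥ Pi.single a 1) a := fun a =>
    (congrFun (Matrix.mulVec_single_one _ a) a).symm
  simp only [Matrix.trace, Matrix.diag_apply, hdiag, prod_ofFn_mulVec]
  rw [Finset.sum_comm]
  refine Finset.sum_congr rfl fun c _ => ?_
  rw [Finset.sum_eq_single (c (Fin.last m))]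
  · rw [← Fin.succ_last, Fin.cons_succ, Pi.single_eq_same, mul_one]
    refine Finset.prod_congr rfl fun i _ => ?_
    cases i using Fin.cases with
    | zero =>
      rw [Fin.castSucc_zero, Fin.cons_zero, zero_sub,
        eq_neg_of_add_eq_zero_left (Fin.last_add_one m)]
    | succ j =>
      rw [← Fin.succ_castSucc, Fin.cons_succ, ← Fin.coeSucc_eq_succ, add_sub_cancel_right]
  · intro b _ hb
    rw [← Fin.succ_last, Fin.cons_succ, Pi.single_eq_of_ne hb.symm, mul_zero]
  · simp

theorem mul_prod_ofFn_of_intertwine {m : ℕ} {M M' : Fin m → Matrix β β R} {S : Matrix β β R}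
    (h : ∀ i, S * M i = M' i * S) : S * (List.ofFn M).prod = (List.ofFn M').prod * S := by
  induction m with
  | zero => simp
  | succ m ih =>
    rw [List.ofFn_succ, List.ofFn_succ, List.prod_cons, List.prod_cons, ← mul_assoc, h, mul_assoc,
      ih fun i => h i.succ, mul_assoc]

theorem mul_sum_prod_cyclic_of_intertwine {N : ℕ} [NeZero N] {M M' : ZMod N → Matrix β β R}
    {S S' : Matrix β β R} {d : R} (h : ∀ x, S * M x = M' x * S) (hS : S' * S = d • 1)
    (hS' : S * S' = d • 1) :
    d * ∑ c : ZMod N → β, ∏ x, M x (c (x - 1)) (c x) =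
      d * ∑ c : ZMod N → β, ∏ x, M' x (c (x - 1)) (c x) := by
  obtain ⟨m, rfl⟩ := Nat.exists_eq_succ_of_ne_zero (NeZero.ne N)
  refine (congrArg (d * ·) (trace_prod_ofFn M)).symm.trans
    (.trans ?_ (congrArg (d * ·) (trace_prod_ofFn M')))
  calc d * (List.ofFn M).prod.trace = (S' * (S * (List.ofFn M).prod)).trace := by
        rw [← mul_assoc, hS, smul_one_mul, Matrix.trace_smul, smul_eq_mul]
    _ = (S' * ((List.ofFn M').prod * S)).trace := by rw [mul_prod_ofFn_of_intertwine h]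
    _ = ((List.ofFn M').prod * (S * S')).trace := by rw [Matrix.trace_mul_comm, mul_assoc]
    _ = d * (List.ofFn M').prod.trace := by
        rw [hS', mul_smul_one, Matrix.trace_smul, smul_eq_mul]

end CyclicTrace

section YangBaxter

variable {R : Type*} [CommRing R]

/-- The weight of a vertex of the five-vertex model: a site whose letter changes from `b` to `a`,
with `ci`, `co` telling whether a particle comes in from the previous site and whether one goes
out to the next. -/
def vertexWt (z : R) (a b ci co : Bool) : R :=
  if (co = true → b = true) ∧ (ci = true → co = false → b = false) ∧ a = (ci || (b && !co)) then
    if co = true then z else 1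
  else 0

/-- Two vertices of the five-vertex model stacked on top of each other, as a matrix from incoming
to outgoing horizontal edges. -/
def stackedVertex (s t : R) (a b : Bool) : Matrix (Bool × Bool) (Bool × Bool) R :=
  Matrix.of fun i o => ∑ k, vertexWt s a k i.1 o.1 * vertexWt t k b i.2 o.2

/-- The R-matrix of the five-vertex model. -/
def fiveVertexR (s t : R) : Matrix (Bool × Bool) (Bool × Bool) R :=
  Matrix.of fun
    | (false, false), (false, false) => s
    | (true, true), (true, true) => t
    | (false, true), (false, true) => t
    | (false, true), (true, false) => s - t
    | (true, false), (true, false) => s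
    | _, _ => 0

theorem fiveVertexR_mul_fiveVertexR (s t : R) :
    fiveVertexR s t * fiveVertexR t s = (s * t) • 1 := by
  ext ⟨i₁, i₂⟩ ⟨o₁, o₂⟩
  cases i₁ <;> cases i₂ <;> cases o₁ <;> cases o₂ <;>
    simp [Matrix.mul_apply, Fintype.sum_prod_type, fiveVertexR] <;> ring

theorem vertexWt_eq_match (z : R) (a b ci co : Bool) :
    vertexWt z a b ci co = match ci, co, a, b with
      | false, false, false, false => 1
      | false, false, true, true => 1
      | false, true, false, true => z
      | true, false, true, false => 1
      | true, true, true, true => z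
      | _, _, _, _ => 0 := by
  cases a <;> cases b <;> cases ci <;> cases co <;> simp [vertexWt]

theorem fiveVertexR_mul_stackedVertex (s t z : R) (a b : Bool) :
    fiveVertexR s t * stackedVertex (s * z) (t * z) a b =
      stackedVertex (t * z) (s * z) a b * fiveVertexR s t := by
  ext ⟨i₁, i₂⟩ ⟨o₁, o₂⟩
  simp only [Matrix.mul_apply, Fintype.sum_prod_type, Fintype.sum_bool, fiveVertexR, stackedVertex,
    vertexWt_eq_match, Matrix.of_apply]
  cases a <;> cases b <;> cases i₁ <;> cases i₂ <;> cases o₁ <;> cases o₂ <;> ring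

end YangBaxter

section TransferMatrix

variable {R : Type*} [CommRing R] {N : ℕ}

open Classical in
/-- The matrix of the hop of the particles at `I`, the site `x` being left with weight `z x`. -/
def hopMatrix (z : ZMod N → R) (I : Finset (ZMod N)) :
    Matrix (ZMod N → Bool) (ZMod N → Bool) R :=
  Matrix.of fun v w => if CanHop I w ∧ hop I w = v then ∏ x ∈ I, z x else 0

theorem hopMatrix_map {S : Type*} [CommRing S] (f : R →+* S) (s : S) (z : ZMod N → R)
    (I : Finset (ZMod N)) :
    hopMatrix (fun x => s * f (z x)) I = s ^ I.card • (hopMatrix z I).map f := by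
  ext v w
  simp only [hopMatrix, Matrix.of_apply, Matrix.smul_apply, Matrix.map_apply, apply_ite f,
    map_zero, map_prod, smul_eq_mul, mul_ite, mul_zero, Finset.prod_mul_distrib,
    Finset.prod_const]

theorem canHop_and_hop_eq_iff {I : Finset (ZMod N)} {v w : ZMod N → Bool} :
    CanHop I w ∧ hop I w = v ↔ ∀ x, (x ∈ I → w x = true) ∧
      (x - 1 ∈ I → x ∉ I → w x = false) ∧
      v x = (decide (x - 1 ∈ I) || (w x && !decide (x ∈ I))) := by
  have hCan : CanHop I w ↔ ∀ x, (x ∈ I → w x = true) ∧ (x - 1 ∈ I → x ∉ I → w x = false) := by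
    refine ⟨fun h x => ⟨fun hx => (h x hx).1, fun hx hx' => ?_⟩, fun h x hx => ⟨(h x).1 hx, ?_⟩⟩
    · have := (h _ hx).2
      rw [sub_add_cancel] at this
      exact this.resolve_left hx'
    · have := (h (x + 1)).2
      rw [add_sub_cancel_right] at this
      exact or_iff_not_imp_left.mpr (this hx)
  have hHop : hop I w = v ↔ ∀ x, v x = (decide (x - 1 ∈ I) || (w x && !decide (x ∈ I))) := by
    rw [funext_iff]
    refine forall_congr' fun x => ?_
    grind [hop]
  rw [hCan, hHop, ← forall_and]
  exact forall_congr' fun x => and_assoc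

variable [NeZero N]

theorem hopMatrix_apply_eq_prod (z : ZMod N → R) (I : Finset (ZMod N)) (v w : ZMod N → Bool) :
    hopMatrix z I v w =
      ∏ x, vertexWt (z x) (v x) (w x) (decide (x - 1 ∈ I)) (decide (x ∈ I)) := by
  simp only [hopMatrix, Matrix.of_apply, vertexWt, decide_eq_true_eq, decide_eq_false_iff_not,
    canHop_and_hop_eq_iff]
  by_cases h : ∀ x, (x ∈ I → w x = true) ∧ (x - 1 ∈ I → x ∉ I → w x = false) ∧
      v x = (decide (x - 1 ∈ I) || (w x && !decide (x ∈ I)))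
  · rw [if_pos h, Finset.prod_congr rfl fun x _ => if_pos (h x), Finset.prod_ite_mem,
      Finset.univ_inter]
  · obtain ⟨x, hx⟩ := not_forall.mp h
    rw [if_neg h, Finset.prod_eq_zero (Finset.mem_univ x) (if_neg hx)]

/-- The row-to-row transfer matrix of the five-vertex model on a cycle with site weights `z`. -/
def transferMatrix (z : ZMod N → R) : Matrix (ZMod N → Bool) (ZMod N → Bool) R :=
  ∑ I, hopMatrix z I

theorem transferMatrix_apply (z : ZMod N → R) (v w : ZMod N → Bool) :
    transferMatrix z v w =
      ∑ c : ZMod N → Bool, ∏ x, vertexWt (z x) (v x) (w x) (c (x - 1)) (c x) := by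
  rw [transferMatrix, Matrix.sum_apply]
  exact Finset.sum_nbij' (fun I x => decide (x ∈ I))
    (fun c => ({x | c x = true} : Finset (ZMod N)))
    (by simp) (by simp) (by simp) (by simp) fun I _ => hopMatrix_apply_eq_prod z I v w

theorem transferMatrix_mul_apply (y z : ZMod N → R) (v w : ZMod N → Bool) :
    (transferMatrix y * transferMatrix z) v w =
      ∑ c : ZMod N → Bool × Bool,
        ∏ x, stackedVertex (y x) (z x) (v x) (w x) (c (x - 1)) (c x) := by
  simp only [Matrix.mul_apply, transferMatrix_apply, stackedVertex, Matrix.of_apply,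
    Finset.prod_univ_sum, Fintype.piFinset_univ, Finset.prod_mul_distrib]
  rw [Finset.sum_comm]
  refine Finset.sum_congr rfl fun k _ => ?_
  rw [Finset.sum_mul_sum, ← (Equiv.arrowProdEquivProdArrow _ _ _).symm.sum_comp,
    Fintype.sum_prod_type]
  rfl

theorem transferMatrix_mul_comm (s t : R) (z : ZMod N → R) :
    (s * t) • (transferMatrix (fun x => s * z x) * transferMatrix fun x => t * z x) =
      (s * t) • (transferMatrix (fun x => t * z x) * transferMatrix fun x => s * z x) := by
  ext v w
  simp only [Matrix.smul_apply, smul_eq_mul, transferMatrix_mul_apply]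
  exact mul_sum_prod_cyclic_of_intertwine (fun x => fiveVertexR_mul_stackedVertex s t (z x) _ _)
    (mul_comm s t ▸ fiveVertexR_mul_fiveVertexR t s) (fiveVertexR_mul_fiveVertexR s t)

theorem transferMatrix_mul_map_apply {S : Type*} [CommRing S] (f : R →+* S) (s t : S)
    (z : ZMod N → R) (v w : ZMod N → Bool) :
    (transferMatrix (fun x => s * f (z x)) * transferMatrix fun x => t * f (z x)) v w =
      ∑ I, ∑ J, s ^ I.card * t ^ J.card * f ((hopMatrix z I * hopMatrix z J) v w) := by
  simp only [transferMatrix, hopMatrix_map, Finset.sum_mul_sum, Matrix.sum_apply,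
    smul_mul_smul_comm, Matrix.smul_apply, smul_eq_mul, ← Matrix.map_mul, Matrix.map_apply]

open Polynomial in
theorem coeff_coeff_C_X_pow_mul_X_pow_mul_C_C (r : R) (i j a b : ℕ) :
    ((C X ^ i * X ^ j * C (C r) : R[X][X]).coeff b).coeff a = if i = a ∧ j = b then r else 0 := by
  rw [coeff_mul_C, ← C_pow, coeff_C_mul, coeff_X_pow, coeff_mul_C, mul_ite, mul_one, mul_zero]
  split_ifs <;> simp_all [coeff_X_pow, eq_comm]

/-- The part of the transfer matrix of degree `a` in the weights. -/
def transferCoeff (z : ZMod N → R) (a : ℕ) : Matrix (ZMod N → Bool) (ZMod N → Bool) R :=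
  ∑ I with I.card = a, hopMatrix z I

theorem transferCoeff_mul_apply (z : ZMod N → R) (a b : ℕ) (v w : ZMod N → Bool) :
    (transferCoeff z a * transferCoeff z b) v w =
      ∑ I, ∑ J, if I.card = a ∧ J.card = b then (hopMatrix z I * hopMatrix z J) v w else 0 := by
  simp only [transferCoeff, Finset.sum_mul_sum, Matrix.sum_apply]
  simp only [Finset.sum_filter, ite_and, Finset.sum_ite_irrel, Finset.sum_const_zero]

open Polynomial in
theorem transferCoeff_commute (z : ZMod N → R) (a b : ℕ) :
    Commute (transferCoeff z a) (transferCoeff z b) := by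
  rw [commute_iff_eq]
  ext v w
  -- Over `R[X][Y]`, the transfer matrices with weights `X * z` and `Y * z` commute.
  have h := congrFun₂ (transferMatrix_mul_comm (C X) X fun x => C (C (z x))) v w
  have h' := congrArg (fun p : R[X][X] => (p.coeff (b + 1)).coeff (a + 1)) h
  have hmap := transferMatrix_mul_map_apply (N := N) ((C : R[X] →+* R[X][X]).comp C)
  simp only [RingHom.comp_apply] at hmap
  simp only [Matrix.smul_apply, smul_eq_mul, mul_assoc (C X : R[X][X]), coeff_C_mul, coeff_X_mul,
    hmap, mul_comm (X ^ _ : R[X][X]) (C X ^ _), finsetSum_coeff,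
    coeff_coeff_C_X_pow_mul_X_pow_mul_C_C] at h'
  rw [transferCoeff_mul_apply, h', transferCoeff_mul_apply]
  exact Finset.sum_congr rfl fun I _ => Finset.sum_congr rfl fun J _ =>
    if_congr and_comm rfl rfl

variable {q : R}

theorem toMatrix_cycProdAsc_uOp {I : Finset (ZMod N)} (hI : I ≠ Finset.univ) :
    LinearMap.toMatrixAlgEquiv (Finsupp.basisSingleOne (R := R)) (cycProdAsc (uOp R N q) I) =
      hopMatrix (fun x => if x = 0 then q else 1) I := by
  ext v w
  rw [LinearMap.toMatrixAlgEquiv_apply, Finsupp.coe_basisSingleOne, cycProdAsc_uOp_single hI,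
    one_mul, hopMatrix, Matrix.of_apply, Finsupp.basisSingleOne_repr, LinearEquiv.refl_apply,
    ite_and]
  split_ifs <;> simp_all

theorem toMatrix_cyclicE_uOp {r : ℕ} (hr : r < N) :
    LinearMap.toMatrixAlgEquiv (Finsupp.basisSingleOne (R := R)) (cyclicE (uOp R N q) r) =
      transferCoeff (fun x => if x = 0 then q else 1) r := by
  rw [cyclicE, map_sum]
  refine Finset.sum_congr (Finset.ext fun I => ?_) fun I hI => ?_
  · rw [Finset.mem_filter, Finset.mem_filter_univ, Finset.mem_ssubsets, Finset.ssubset_univ_iff,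
      ← Finset.card_lt_iff_ne_univ, ZMod.card]
    omega
  · refine toMatrix_cycProdAsc_uOp ((Finset.card_lt_iff_ne_univ I).mp ?_)
    rwa [(Finset.mem_filter_univ I).mp hI, ZMod.card]

theorem commute_cyclicE_uOp (r s : ℤ) :
    Commute (cyclicE (uOp R N q) r) (cyclicE (uOp R N q) s) := by
  have hlift : ∀ r : ℤ, cyclicE (uOp R N q) r = 0 ∨ ∃ a < N, r = (a : ℕ) := by
    intro r
    obtain h | h | h : r < 0 ∨ (N : ℤ) ≤ r ∨ 0 ≤ r ∧ r < N := by omega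
    · exact .inl (cyclicE_of_neg _ h)
    · exact .inl (cyclicE_of_le _ h)
    · exact .inr ⟨r.toNat, by omega, by omega⟩
  obtain h | ⟨a, ha, rfl⟩ := hlift r
  · exact h ▸ Commute.zero_left _
  obtain h | ⟨b, hb, rfl⟩ := hlift s
  · exact h ▸ Commute.zero_right _
  refine (LinearMap.toMatrixAlgEquiv (Finsupp.basisSingleOne (R := R))).injective ?_
  rw [map_mul, map_mul, toMatrix_cyclicE_uOp ha, toMatrix_cyclicE_uOp hb, transferCoeff_commute]

end TransferMatrix

/-! ### The Jacobi–Trudi identity -/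

section MayaDiagram

variable {a b : ℕ} {lam : Fin a → ℕ}

/-- `ψ` lists the Maya diagram of the partition `lam` in the `a × b` box: the particles
`ψ (inl i) = λ_{i+1} + a - (i + 1)` and the holes `ψ (inr j) = a + j - λ^t_{j+1}`. -/
structure IsMayaEquiv (lam : Fin a → ℕ) (ψ : Fin a ⊕ Fin b ≃ Fin (a + b)) : Prop where
  inl_add : ∀ i, (ψ (Sum.inl i) : ℕ) + i + 1 = lam i + a
  inr_add : ∀ j, (ψ (Sum.inr j) : ℕ) + transpGen lam b j = a + j

/-- The Maya diagram of the empty partition. -/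
def emptyMayaEquiv (a b : ℕ) : Fin a ⊕ Fin b ≃ Fin (a + b) :=
  (Equiv.sumCongr Fin.revPerm (Equiv.refl _)).trans finSumFinEquiv

theorem emptyMayaEquiv_inl_add (b : ℕ) (i : Fin a) :
    (emptyMayaEquiv a b (Sum.inl i) : ℕ) + i + 1 = a := by
  simp only [emptyMayaEquiv, Equiv.trans_apply, Equiv.sumCongr_apply, Sum.map_inl,
    Fin.revPerm_apply, finSumFinEquiv_apply_left, Fin.val_castAdd, Fin.val_rev]
  omega

theorem emptyMayaEquiv_inr (a : ℕ) (j : Fin b) :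
    (emptyMayaEquiv a b (Sum.inr j) : ℕ) = a + j := by
  simp [emptyMayaEquiv]

theorem isMayaEquiv_emptyMayaEquiv (h : ∀ i, lam i = 0) :
    IsMayaEquiv lam (emptyMayaEquiv a b) where
  inl_add i := by rw [emptyMayaEquiv_inl_add, h, zero_add]
  inr_add j := by simp [emptyMayaEquiv_inr, transpGen, h]

/-- The partition `lam` with the last box of row `i` removed. -/
def removeBox (lam : Fin a → ℕ) (i x : Fin a) : ℕ := if x = i then lam i - 1 else lam x

theorem exists_last_row_ne_zero (h : ∑ i, lam i ≠ 0) :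
    ∃ i, lam i ≠ 0 ∧ ∀ i', i < i' → lam i' = 0 := by
  obtain ⟨i₀, -, hi₀⟩ := Finset.exists_ne_zero_of_sum_ne_zero h
  obtain ⟨i, -, hi⟩ := Finite.exists_le_maximal (p := fun i => lam i ≠ 0) hi₀
  exact ⟨i, hi.1, fun i' hi' => not_not.mp fun h' => (hi.2 h' hi'.le).not_gt hi'⟩

theorem sum_removeBox {i : Fin a} (hi : lam i ≠ 0) :
    ∑ x, removeBox lam i x + 1 = ∑ x, lam x := by
  have hne : ∑ x ∈ Finset.univ.erase i, removeBox lam i x = ∑ x ∈ Finset.univ.erase i, lam x :=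
    Finset.sum_congr rfl fun x hx => if_neg (Finset.ne_of_mem_erase hx)
  have hself : removeBox lam i i = lam i - 1 := if_pos rfl
  rw [← Finset.add_sum_erase _ _ (Finset.mem_univ i), hne, hself,
    ← Finset.add_sum_erase _ lam (Finset.mem_univ i)]
  omega

theorem transpGen_removeBox_of_ne {i : Fin a} {j : Fin b} (hj : (j : ℕ) + 1 ≠ lam i) :
    transpGen (removeBox lam i) b j = transpGen lam b j := by
  refine congrArg Finset.card (Finset.filter_congr fun x _ => ?_)
  grind [removeBox]

section LastRow

variable {i : Fin a} (hlam : Antitone lam) (hlast : ∀ i', i < i' → lam i' = 0)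
include hlam hlast

theorem antitone_removeBox : Antitone (removeBox lam i) := by
  intro x y hxy
  have := hlam hxy
  have := hlast y
  grind [removeBox]

theorem transpGen_of_add_one_eq {j : Fin b} (hj : (j : ℕ) + 1 = lam i) :
    transpGen lam b j = i + 1 := by
  rw [← Fin.card_Iic]
  refine congrArg Finset.card (Finset.ext fun x => ?_)
  rw [Finset.mem_filter_univ, Finset.mem_Iic, hj]
  exact ⟨fun h => not_lt.mp fun h' => by have := hlast x h'; omega, fun h => hlam h⟩

theorem transpGen_removeBox_of_add_one_eq {j : Fin b} (hj : (j : ℕ) + 1 = lam i) :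
    transpGen (removeBox lam i) b j = i := by
  rw [← Fin.card_Iio]
  refine congrArg Finset.card (Finset.ext fun x => ?_)
  rw [Finset.mem_filter_univ, Finset.mem_Iio, hj]
  have := hlast x
  have : x ≤ i → lam i ≤ lam x := fun h => hlam h
  grind [removeBox]

theorem IsMayaEquiv.swap_trans {ψ : Fin a ⊕ Fin b ≃ Fin (a + b)}
    (hψ : IsMayaEquiv (removeBox lam i) ψ) {j : Fin b} (hj : (j : ℕ) + 1 = lam i) :
    IsMayaEquiv lam ((Equiv.swap (Sum.inl i) (Sum.inr j)).trans ψ) where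
  inl_add x := by
    have hx := hψ.inl_add x
    have hj' := hψ.inr_add j
    rw [transpGen_removeBox_of_add_one_eq hlam hlast hj] at hj'
    grind [removeBox]
  inr_add y := by
    have hy := hψ.inr_add y
    have hi' := hψ.inl_add i
    by_cases hyj : y = j
    · rw [hyj, transpGen_of_add_one_eq hlam hlast hj]
      grind [removeBox, Equiv.swap_apply_right]
    · rw [transpGen_removeBox_of_ne fun h => hyj (Fin.ext (by omega))] at hy
      grind [Equiv.swap_apply_of_ne_of_ne]

end LastRow

theorem exists_isMayaEquiv (hlam : Antitone lam) (hb : ∀ i, lam i ≤ b) :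
    ∃ ψ : Fin a ⊕ Fin b ≃ Fin (a + b), IsMayaEquiv lam ψ ∧
      Equiv.Perm.sign (ψ.trans (emptyMayaEquiv a b).symm) = (-1) ^ ∑ i, lam i := by
  induction hm : ∑ i, lam i generalizing lam with
  | zero =>
    refine ⟨emptyMayaEquiv a b, isMayaEquiv_emptyMayaEquiv fun i => ?_, by simp⟩
    exact Finset.sum_eq_zero_iff.mp hm i (Finset.mem_univ i)
  | succ m ih =>
    obtain ⟨i, hi, hlast⟩ := exists_last_row_ne_zero (hm.trans_ne m.succ_ne_zero)
    obtain ⟨ψ, hψ, hsign⟩ := ih (antitone_removeBox hlam hlast)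
      (fun x => by have := hb x; grind [removeBox]) (by have := sum_removeBox hi; omega)
    have hib := hb i
    let j : Fin b := ⟨lam i - 1, by omega⟩
    refine ⟨_, hψ.swap_trans hlam hlast (j := j) (Nat.sub_add_cancel (by omega)), ?_⟩
    rw [Equiv.trans_assoc, ← Equiv.Perm.mul_def, Equiv.Perm.sign_mul, hsign,
      Equiv.Perm.sign_swap Sum.inl_ne_inr, pow_succ]

end MayaDiagram

section Toeplitz

/-- `e` and `h` behave up to degree `N` like the elementary and complete homogeneous symmetric
polynomials: `∑ e_r t^r` and `∑ h_r (-t)^r` are inverse power series modulo `t^N`. -/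
structure WronskiPair {A : Type*} [Ring A] (N : ℕ) (e h : ℤ → A) : Prop where
  left_zero : e 0 = 1
  right_zero : h 0 = 1
  left_neg : ∀ t < 0, e t = 0
  right_neg : ∀ t < 0, h t = 0
  sum_antidiagonal : ∀ r : ℕ, 0 < r → r < N →
    ∑ p ∈ Finset.HasAntidiagonal.antidiagonal r, (-1) ^ p.2 * (e p.1 * h p.2) = 0

variable {B : Type*}

/-- The Toeplitz matrix `(f_{y-x})` of size `m`. -/
def toeplitz (m : ℕ) (f : ℤ → B) : Matrix (Fin m) (Fin m) B :=
  Matrix.of fun x y => f ((y : ℕ) - (x : ℕ))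

variable [CommRing B]

/-- The sequence `(-1)^t f_t`. -/
def alternate (f : ℤ → B) (t : ℤ) : B := ((t.negOnePow : ℤ) : B) * f t

theorem alternate_natCast (f : ℤ → B) (r : ℕ) : alternate f r = (-1) ^ r * f r := by
  simp [alternate, Int.negOnePow_def]

theorem alternate_sub_add (h : ℤ → B) (l i j : ℕ) :
    alternate h ((l : ℤ) - i + j) = (-1) ^ (l + i) * ((-1) ^ j * h ((l : ℤ) - i + j)) := by
  rw [alternate, Int.negOnePow_add, Int.negOnePow_sub]
  simp [Int.negOnePow_def, pow_add, mul_assoc]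

theorem alternate_of_neg {f : ℤ → B} (hf : ∀ t < 0, f t = 0) {t : ℤ} (ht : t < 0) :
    alternate f t = 0 := by
  rw [alternate, hf t ht, mul_zero]

theorem toeplitz_isUpperTriangular {m : ℕ} {f : ℤ → B} (hf : ∀ t < 0, f t = 0) :
    (toeplitz m f).IsUpperTriangular :=
  fun x y (hxy : y < x) => hf _ (by have : (y : ℕ) < x := hxy; omega)

theorem det_toeplitz {m : ℕ} {f : ℤ → B} (hf : ∀ t < 0, f t = 0) :
    (toeplitz m f).det = f 0 ^ m := by
  rw [Matrix.det_of_isUpperTriangular (toeplitz_isUpperTriangular hf)]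
  simp [toeplitz]

theorem toeplitz_mul_apply {m : ℕ} {f g : ℤ → B} (hf : ∀ t < 0, f t = 0) (hg : ∀ t < 0, g t = 0)
    {x z : Fin m} (hxz : x ≤ z) :
    (toeplitz m f * toeplitz m g) x z =
      ∑ p ∈ Finset.HasAntidiagonal.antidiagonal ((z : ℕ) - x), f p.1 * g p.2 := by
  have hxz' : (x : ℕ) ≤ z := hxz
  have hsub : Finset.Ico (x : ℕ) (z + 1) ⊆ Finset.range m := fun y hy => by
    have := z.isLt
    rw [Finset.mem_Ico] at hy
    exact Finset.mem_range.mpr (by omega)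
  calc ∑ y : Fin m, f ((y : ℕ) - (x : ℕ)) * g ((z : ℕ) - (y : ℕ))
      = ∑ y ∈ Finset.range m, f (y - (x : ℕ)) * g ((z : ℕ) - y) :=
        Fin.sum_univ_eq_sum_range (fun y : ℕ => f (y - (x : ℕ)) * g ((z : ℕ) - y)) m
    _ = ∑ y ∈ Finset.Ico (x : ℕ) (z + 1), f (y - (x : ℕ)) * g ((z : ℕ) - y) := by
        refine (Finset.sum_subset hsub fun y _ hy => ?_).symm
        rw [Finset.mem_Ico, not_and_or, not_le, not_lt] at hy
        rcases hy with hy | hy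
        · rw [hf _ (by omega), zero_mul]
        · rw [hg _ (by omega), mul_zero]
    _ = ∑ p ∈ Finset.HasAntidiagonal.antidiagonal ((z : ℕ) - x), f p.1 * g p.2 := by
        rw [Finset.sum_Ico_eq_sum_range, Finset.Nat.sum_antidiagonal_eq_sum_range_succ
          fun i j : ℕ => f i * g j, Nat.sub_add_comm hxz']
        refine Finset.sum_congr rfl fun y hy => ?_
        rw [Finset.mem_range] at hy
        congr 2 <;> omega

theorem WronskiPair.toeplitz_mul {m : ℕ} {e h : ℤ → B} (he : WronskiPair m e h) :
    toeplitz m e * toeplitz m (alternate h) = 1 := by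
  have halt : ∀ t < 0, alternate h t = 0 := fun t => alternate_of_neg he.right_neg
  ext x z
  rcases lt_trichotomy x z with hxz | rfl | hxz
  · have : (x : ℕ) < z := hxz
    rw [Matrix.one_apply_ne hxz.ne, toeplitz_mul_apply he.left_neg halt hxz.le,
      ← he.sum_antidiagonal (z - x) (by omega) (by omega)]
    refine Finset.sum_congr rfl fun p _ => ?_
    rw [alternate_natCast, mul_left_comm]
  · rw [Matrix.one_apply_eq, toeplitz_mul_apply he.left_neg halt le_rfl]
    simp [alternate, he.left_zero, he.right_zero]
  · rw [Matrix.one_apply_ne hxz.ne']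
    exact (toeplitz_isUpperTriangular he.left_neg).mul (toeplitz_isUpperTriangular halt) hxz

/-- Jacobi's identity for complementary minors of inverse matrices. -/
theorem det_mul_det_toBlocks₂₂ {m n : Type*} [Fintype m] [Fintype n] [DecidableEq m]
    [DecidableEq n] {H E : Matrix (m ⊕ n) (m ⊕ n) B} (hHE : H * E = 1) :
    H.det * E.toBlocks₂₂.det = H.toBlocks₁₁.det := by
  have hblock : H * Matrix.fromBlocks 1 E.toBlocks₁₂ 0 E.toBlocks₂₂ =
      Matrix.fromBlocks H.toBlocks₁₁ 0 H.toBlocks₂₁ 1 := by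
    rw [← Matrix.fromBlocks_toBlocks H, ← Matrix.fromBlocks_toBlocks E,
      Matrix.fromBlocks_multiply, ← Matrix.fromBlocks_one, Matrix.fromBlocks_inj] at hHE
    obtain ⟨-, h₁₂, -, h₂₂⟩ := hHE
    conv_lhs => rw [← Matrix.fromBlocks_toBlocks H]
    simp [Matrix.fromBlocks_multiply, h₁₂, h₂₂]
  simpa [Matrix.det_fromBlocks_zero₂₁, Matrix.det_fromBlocks_zero₁₂] using
    congrArg Matrix.det hblock

end Toeplitz

section JacobiTrudi

variable {B : Type*} {a b : ℕ} {lam : Fin a → ℕ} {ψ : Fin a ⊕ Fin b ≃ Fin (a + b)}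

theorem IsMayaEquiv.toBlocks₁₁_submatrix_toeplitz (hψ : IsMayaEquiv lam ψ) (f : ℤ → B) :
    ((toeplitz (a + b) f).submatrix (emptyMayaEquiv a b) ψ).toBlocks₁₁ =
      Matrix.of fun i j : Fin a => f ((lam j : ℤ) - (j : ℕ) + (i : ℕ)) := by
  ext i j
  have := emptyMayaEquiv_inl_add b i
  have := hψ.inl_add j
  refine congrArg f ?_
  omega

theorem IsMayaEquiv.toBlocks₂₂_submatrix_toeplitz (hψ : IsMayaEquiv lam ψ) (f : ℤ → B) :
    ((toeplitz (a + b) f).submatrix ψ (emptyMayaEquiv a b)).toBlocks₂₂ =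
      Matrix.of fun i j : Fin b => f ((transpGen lam b i : ℤ) - (i : ℕ) + (j : ℕ)) := by
  ext i j
  have := hψ.inr_add i
  have := emptyMayaEquiv_inr a j
  refine congrArg f ?_
  omega

variable [CommRing B]

theorem IsMayaEquiv.det_toBlocks₁₁_submatrix_toeplitz (hψ : IsMayaEquiv lam ψ) (h : ℤ → B) :
    ((toeplitz (a + b) (alternate h)).submatrix (emptyMayaEquiv a b) ψ).toBlocks₁₁.det =
      (-1) ^ (∑ i, lam i) *
        (Matrix.of fun i j : Fin a => h ((lam i : ℤ) - (i : ℕ) + (j : ℕ))).det := by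
  have hsign : ∏ i : Fin a, ((-1 : B) ^ (lam i + i) * (-1) ^ (i : ℕ)) = (-1) ^ ∑ i, lam i := by
    rw [← Finset.prod_pow_eq_pow_sum]
    refine Finset.prod_congr rfl fun i _ => ?_
    rw [pow_add, mul_assoc, ← mul_pow, neg_one_mul, neg_neg, one_pow, mul_one]
  rw [hψ.toBlocks₁₁_submatrix_toeplitz, ← hsign, Finset.prod_mul_distrib, mul_assoc,
    ← Matrix.det_mul_row, ← Matrix.det_mul_column, ← Matrix.det_transpose]
  exact congrArg Matrix.det (Matrix.ext fun i j => alternate_sub_add h (lam i) i j)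

theorem det_toeplitz_submatrix {f : ℤ → B} (hf : ∀ t < 0, f t = 0) (hf₀ : f 0 = 1) {m : ℕ}
    {ι : Type*} [Fintype ι] [DecidableEq ι] (φ ψ : ι ≃ Fin m) :
    ((toeplitz m f).submatrix φ ψ).det = (Equiv.Perm.sign (ψ.trans φ.symm) : ℤ) := by
  have hcomp : (toeplitz m f).submatrix φ ψ =
      ((toeplitz m f).submatrix φ φ).submatrix id (ψ.trans φ.symm) := by
    ext i j
    simp
  rw [hcomp, Matrix.det_permute', Matrix.det_submatrix_equiv_self, det_toeplitz hf, hf₀, one_pow,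
    mul_one]

theorem WronskiPair.det_transpGen {e h : ℤ → B} (he : WronskiPair (a + b) e h)
    (hlam : Antitone lam) (hb : ∀ i, lam i ≤ b) :
    (Matrix.of fun i j : Fin b => e ((transpGen lam b i : ℤ) - (i : ℕ) + (j : ℕ))).det =
      (Matrix.of fun i j : Fin a => h ((lam i : ℤ) - (i : ℕ) + (j : ℕ))).det := by
  obtain ⟨ψ, hψ, hsign⟩ := exists_isMayaEquiv hlam hb
  have hinv : (toeplitz (a + b) (alternate h)).submatrix (emptyMayaEquiv a b) ψ *
      (toeplitz (a + b) e).submatrix ψ (emptyMayaEquiv a b) = 1 := by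
    rw [Matrix.submatrix_mul_equiv, mul_eq_one_comm.mp he.toeplitz_mul,
      Matrix.submatrix_one_equiv]
  have hdet : ((toeplitz (a + b) (alternate h)).submatrix (emptyMayaEquiv a b) ψ).det =
      (-1) ^ ∑ i, lam i := by
    rw [det_toeplitz_submatrix (fun _ => alternate_of_neg he.right_neg) (by simp [alternate,
      he.right_zero]), hsign]
    simp
  have key := det_mul_det_toBlocks₂₂ hinv
  rw [hdet, hψ.toBlocks₂₂_submatrix_toeplitz, hψ.det_toBlocks₁₁_submatrix_toeplitz] at key
  exact (isUnit_neg_one.pow _).mul_left_cancel key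

end JacobiTrudi

section NoncommutativeJacobiTrudi

variable {A : Type*} [Ring A]

theorem map_ncDet {F C : Type*} [Ring C] [FunLike F A C] [RingHomClass F A C] (f : F) {r : ℕ}
    (M : Fin r → Fin r → A) : f (ncDet M) = ncDet fun i j => f (M i j) := by
  simp [ncDet, map_list_prod, Function.comp_def]

theorem ncDet_eq_det {B : Type*} [CommRing B] {r : ℕ} (M : Fin r → Fin r → B) :
    ncDet M = (Matrix.of M).det := by
  simp [ncDet, Matrix.det_apply', Fin.prod_univ_def]

namespace WronskiPair

variable {N : ℕ} {e h : ℤ → A}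

theorem mono (he : WronskiPair N e h) {m : ℕ} (hm : m ≤ N) : WronskiPair m e h where
  __ := he
  sum_antidiagonal r hr hrm := he.sum_antidiagonal r hr (hrm.trans_le hm)

theorem right_natCast_mem_closure (he : WronskiPair N e h) {r : ℕ} (hr : r < N) :
    h r ∈ Subring.closure (Set.range e) := by
  induction r using Nat.strong_induction_on with
  | _ r ih =>
    have hsign : (-1) ^ r ∈ Subring.closure (Set.range e) := pow_mem (neg_mem (one_mem _)) r
    rcases r with _ | r
    · rw [Nat.cast_zero, he.right_zero]
      exact one_mem _
    have hrel := he.sum_antidiagonal (r + 1) r.succ_pos hr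
    rw [Finset.Nat.sum_antidiagonal_succ, Nat.cast_zero, he.left_zero, one_mul] at hrel
    have hsum : (-1) ^ (r + 1) * h ((r + 1 : ℕ) : ℤ) ∈ Subring.closure (Set.range e) := by
      rw [eq_neg_of_add_eq_zero_left hrel]
      refine neg_mem (sum_mem fun p hp => mul_mem (pow_mem (neg_mem (one_mem _)) _)
        (mul_mem (Subring.subset_closure ⟨_, rfl⟩) ?_))
      have := Finset.HasAntidiagonal.mem_antidiagonal.mp hp
      exact ih p.2 (by omega) (by omega)
    have := mul_mem hsign hsum
    rwa [← mul_assoc, ← pow_add, Even.neg_one_pow ⟨_, rfl⟩, one_mul] at this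

theorem right_mem_closure (he : WronskiPair N e h) {t : ℤ} (ht : t < N) :
    h t ∈ Subring.closure (Set.range e) := by
  rcases lt_or_ge t 0 with ht₀ | ht₀
  · rw [he.right_neg t ht₀]
    exact zero_mem _
  · lift t to ℕ using ht₀
    exact he.right_natCast_mem_closure (by exact_mod_cast ht)

theorem of_map {B : Type*} [Ring B] {f : B →+* A} (hf : Function.Injective f) {e' h' : ℤ → B}
    (he : WronskiPair N e h) (he' : ∀ t, f (e' t) = e t)
    (hh' : ∀ t, h t ∈ f.range → f (h' t) = h t) (hmem : ∀ t < (N : ℤ), h t ∈ f.range) :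
    WronskiPair N e' h' where
  left_zero := hf (by rw [he', he.left_zero, map_one])
  right_zero := hf (by rw [hh' 0 (he.right_zero ▸ one_mem _), he.right_zero, map_one])
  left_neg t ht := hf (by rw [he', he.left_neg t ht, map_zero])
  right_neg t ht := hf (by
    rw [hh' t (he.right_neg t ht ▸ zero_mem _), he.right_neg t ht, map_zero])
  sum_antidiagonal r hr hrN := hf (by
    rw [map_sum, map_zero, ← he.sum_antidiagonal r hr hrN]
    refine Finset.sum_congr rfl fun p hp => ?_
    have := Finset.HasAntidiagonal.mem_antidiagonal.mp hp
    rw [map_mul, map_mul, he', hh' p.2 (hmem p.2 (by omega)), map_pow, map_neg, map_one])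

open scoped IsMulCommutative in
/-- The commutative case applies because the `h_r` are polynomials in the commuting `e_r`. -/
theorem ncDet_transpGen {a b : ℕ} {lam : Fin a → ℕ} (he : WronskiPair (a + b) e h)
    (hcomm : ∀ s t, Commute (e s) (e t)) (hlam : Antitone lam) (hb : ∀ i, lam i ≤ b) :
    (ncDet fun i j : Fin b => e ((transpGen lam b i : ℤ) - (i : ℕ) + (j : ℕ))) =
      ncDet fun i j : Fin a => h ((lam i : ℤ) - (i : ℕ) + (j : ℕ)) := by
  let S := Subring.closure (Set.range e)
  have : IsMulCommutative S := Subring.isMulCommutative_closure (by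
    rintro _ ⟨s, rfl⟩ _ ⟨t, rfl⟩
    exact hcomm s t)
  have hmem : ∀ t < ((a + b : ℕ) : ℤ), h t ∈ S.subtype.range := fun t ht => by
    simpa using he.right_mem_closure ht
  let e' : ℤ → S := fun t => ⟨e t, Subring.subset_closure ⟨t, rfl⟩⟩
  have hlift : ∀ t, ∃ x, h t ∈ S.subtype.range → S.subtype x = h t := fun t => by
    by_cases ht : h t ∈ S.subtype.range
    · exact ht.imp fun x hx _ => hx
    · exact ⟨0, fun h => absurd h ht⟩
  choose h' hh' using hlift
  have he' : WronskiPair (a + b) e' h' := he.of_map Subtype.val_injective (fun _ => rfl) hh' hmem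
  have hdet := congrArg S.subtype (he'.det_transpGen hlam hb)
  rw [← ncDet_eq_det, ← ncDet_eq_det, map_ncDet, map_ncDet] at hdet
  refine hdet.trans (congrArg ncDet (funext₂ fun i j => hh' _ (hmem _ ?_)))
  have := hb i
  omega

end WronskiPair

theorem FarCommute.wronskiPair {N : ℕ} [NeZero N] {u : ZMod N → A} (hu : FarCommute u)
    (hsq : ∀ x, u x * u x = 0) : WronskiPair N (cyclicE u) (cyclicH u) where
  left_zero := cyclicE_zero u
  right_zero := by rw [← hu.cyclicE_comp_neg, cyclicE_zero]
  left_neg _ := cyclicE_of_neg u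
  right_neg _ ht := by rw [← hu.cyclicE_comp_neg, cyclicE_of_neg _ ht]
  sum_antidiagonal _ := hu.sum_antidiagonal_cyclicE_mul_cyclicH hsq

end NoncommutativeJacobiTrudi

/-! ### Particle–hole duality -/

section ParticleHole

variable {R : Type*} [CommRing R] {N : ℕ} {q : R}

/-- The particle–hole symmetry on words: reflect `ℤ/Nℤ` by `p ↦ 1 - p` and exchange the letters. -/
def particleHole (N : ℕ) : Equiv.Perm (ZMod N → Bool) :=
  Function.Involutive.toPerm (fun w p => !w (1 - p)) fun w => by simp

theorem particleHole_apply (w : ZMod N → Bool) (p : ZMod N) : particleHole N w p = !w (1 - p) :=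
  rfl

theorem particleHole_symm : (particleHole N).symm = particleHole N :=
  rfl

theorem particleHole_comp_swap (w : ZMod N → Bool) (c : ZMod N) :
    particleHole N (particleHole N w ∘ Equiv.swap c (c + 1)) =
      w ∘ Equiv.swap (-c) (-c + 1) := by
  funext p
  have h : 1 - Equiv.swap c (c + 1) (1 - p) = Equiv.swap (-c) (-c + 1) p := by
    grind
  rw [particleHole_apply, Function.comp_apply, particleHole_apply, Bool.not_not, h,
    Function.comp_apply]

/-- Conjugation of operators on words by the particle–hole symmetry. -/
def particleHoleConj (R : Type*) [CommRing R] (N : ℕ) :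
    Module.End R (WSp R N) ≃+* Module.End R (WSp R N) :=
  (Finsupp.domLCongr (particleHole N)).conjRingEquiv

theorem particleHoleConj_apply_single (f : Module.End R (WSp R N)) (w v : ZMod N → Bool) (a : R) :
    particleHoleConj R N f (Finsupp.single w a) v =
      f (Finsupp.single (particleHole N w) a) (particleHole N v) := by
  simp [particleHoleConj, LinearEquiv.conjRingEquiv, particleHole_symm]

variable [NeZero N]

theorem particleHoleConj_uOp (c : ZMod N) :
    particleHoleConj R N (uOp R N q c) = uOp R N q (-c) := by
  refine WSp.end_ext fun w => Finsupp.ext fun v => ?_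
  have hcond : (particleHole N w c = true ∧ particleHole N w (c + 1) = false) ↔
      (w (-c) = true ∧ w (-c + 1) = false) := by
    simp [particleHole_apply, and_comm, neg_add_eq_sub]
  simp only [particleHoleConj_apply_single, uOp_single, hcond, ← particleHole_comp_swap,
    neg_eq_zero]
  split_ifs
  all_goals simp [Finsupp.single_apply, ← (particleHole N).eq_symm_apply, particleHole_symm]

theorem particleHoleConj_cyclicE (r : ℤ) :
    particleHoleConj R N (cyclicE (uOp R N q) r) = cyclicH (uOp R N q) r := by
  rw [← farCommute_uOp.cyclicE_comp_neg, cyclicE, cyclicE, map_sum]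
  simp only [map_cycProdAsc, particleHoleConj_uOp]

end ParticleHole

section Words

theorem pairW_single_one {R : Type*} [CommRing R] {N : ℕ} [NeZero N] (w : ZMod N → Bool)
    (g : WSp R N) : pairW (Finsupp.single w 1) g = g w := by
  simp [pairW, Finsupp.single_apply]

theorem wordOf_eq_true_iff {N k : ℕ} {lam : Fin k → ℕ} {p : ZMod N} :
    wordOf N k lam p = true ↔ ∃ i : Fin k, p + (i : ℕ) = lam i + k := by
  rw [wordOf, decide_eq_true_iff, Fin.revPerm.exists_congr_left]
  refine exists_congr fun i => ?_
  have hi : ((i.rev : ℕ) + 1 + (i : ℕ) : ZMod N) = (k : ZMod N) := by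
    rw [Fin.val_rev]
    exact_mod_cast congrArg (Nat.cast (R := ZMod N)) (by omega : k - (i + 1) + 1 + i = k)
  rw [← hi]
  simp [← add_assoc]

theorem finEquiv_eq_natCast : ∀ (N : ℕ) [NeZero N] (x : Fin N),
    ZMod.finEquiv N x = ((x : ℕ) : ZMod N)
  | _ + 1, _, x => (Fin.cast_val_eq_self x).symm

variable {n k : ℕ} {lam : Fin k → ℕ}

theorem IsMayaEquiv.exists_zmod_equiv [NeZero (n + k)] {ψ : Fin k ⊕ Fin n ≃ Fin (k + n)}
    (hψ : IsMayaEquiv lam ψ) : ∃ φ : Fin k ⊕ Fin n ≃ ZMod (n + k),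
      (∀ i : Fin k, φ (Sum.inl i) + 1 + (i : ℕ) = lam i + k) ∧
        ∀ j : Fin n, -φ (Sum.inr j) + (j : ℕ) = transpGen lam n j + n := by
  have hN : (n : ZMod (n + k)) + (k : ZMod (n + k)) = 0 := by
    rw [← Nat.cast_add, ZMod.natCast_self]
  let φ := ψ.trans ((finCongr (add_comm k n)).trans (ZMod.finEquiv (n + k)).toEquiv)
  have hφ (x) : φ x = ((ψ x : ℕ) : ZMod (n + k)) := by
    exact finEquiv_eq_natCast (n + k) (Fin.cast (add_comm k n) (ψ x))
  refine ⟨φ, fun i => ?_, fun j => ?_⟩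
  · have := congrArg (Nat.cast (R := ZMod (n + k))) (hψ.inl_add i)
    push_cast at this
    rw [hφ]
    linear_combination this
  · have := congrArg (Nat.cast (R := ZMod (n + k))) (hψ.inr_add j)
    push_cast at this
    rw [hφ]
    linear_combination -hN - this

theorem particleHole_wordOf [NeZero (n + k)] (hlam : Antitone lam) (hn : ∀ i, lam i ≤ n) :
    particleHole (n + k) (wordOf (n + k) k lam) = wordOf (n + k) n (transpGen lam n) := by
  obtain ⟨ψ, hψ, -⟩ := exists_isMayaEquiv hlam hn
  obtain ⟨φ, hφ, hφ'⟩ := hψ.exists_zmod_equiv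
  funext p
  rw [Bool.eq_iff_iff, particleHole_apply, Bool.not_eq_true', ← Bool.not_eq_true,
    wordOf_eq_true_iff, wordOf_eq_true_iff]
  have hinl (i : Fin k) : 1 - p + (i : ℕ) = lam i + k ↔ φ.symm (-p) = Sum.inl i := by
    rw [← hφ, φ.symm_apply_eq]
    grind
  have hinr (j : Fin n) : p + (j : ℕ) = transpGen lam n j + n ↔ φ.symm (-p) = Sum.inr j := by
    rw [← hφ', φ.symm_apply_eq]
    grind
  simp only [hinl, hinr]
  cases φ.symm (-p) <;> simp

end Words

section Transpose

variable {k : ℕ} {lam : Fin k → ℕ} (n : ℕ)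

theorem lt_transpGen_iff (hlam : Antitone lam) {i : Fin k} {j : Fin n} :
    (i : ℕ) < transpGen lam n j ↔ (j : ℕ) < lam i := by
  refine ⟨fun h => ?_, fun h => ?_⟩
  · contrapose! h
    rw [← Fin.card_Iio]
    refine Finset.card_le_card fun x hx => ?_
    rw [Finset.mem_filter_univ] at hx
    exact Finset.mem_Iio.mpr (lt_of_not_ge fun hix => by have := hlam hix; omega)
  · rw [← Order.add_one_le_iff, ← Fin.card_Iic]
    refine Finset.card_le_card fun x hx => ?_
    rw [Finset.mem_filter_univ]
    exact h.trans_le (hlam (Finset.mem_Iic.mp hx))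

theorem transpGen_le (j : Fin n) : transpGen lam n j ≤ k :=
  (Finset.card_le_univ _).trans_eq (Fintype.card_fin k)

theorem transpGen_transpGen (hlam : Antitone lam) {a : ℕ} (ha : a ≤ k) {i : Fin a}
    (hn : lam (Fin.castLE ha i) ≤ n) :
    transpGen (transpGen lam n) a i = lam (Fin.castLE ha i) := by
  rw [← min_eq_right hn, ← Fin.card_filter_val_lt]
  refine congrArg Finset.card (Finset.filter_congr fun j _ => ?_)
  exact lt_transpGen_iff n hlam (i := Fin.castLE ha i)

theorem transpGen_comp_castLE {a : ℕ} (ha : a ≤ k) (h : ∀ i, 0 < lam i → (i : ℕ) < a) (j : Fin n) :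
    transpGen (lam ∘ Fin.castLE ha) n j = transpGen lam n j := by
  rw [transpGen, ← Finset.card_map (Fin.castLEEmb ha)]
  refine congrArg Finset.card (Finset.ext fun x => ?_)
  simp only [Finset.mem_map, Finset.mem_filter_univ]
  constructor
  · rintro ⟨y, hy, rfl⟩
    exact hy
  · exact fun hx => ⟨⟨x, h x (by omega)⟩, hx, rfl⟩

theorem padded_zero_le {f : Fin k → ℕ} {c : ℕ} (hf : ∀ i, f i ≤ c) : padded f 0 ≤ c := by
  rw [padded]
  split_ifs
  exacts [hf _, c.zero_le]

theorem le_padded_zero {f : Fin k → ℕ} (hf : Antitone f) (i : Fin k) :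
    f i ≤ padded f 0 := by
  rw [padded, dif_pos i.pos]
  exact hf (Nat.zero_le i)

end Transpose

theorem antitone_partVal {r c : ℕ} (σ : PartBox r c) : Antitone (partVal σ) :=
  fun i j => σ.2 i j

theorem partVal_le {r c : ℕ} (σ : PartBox r c) (i : Fin r) : partVal σ i ≤ c :=
  (σ.1 i).is_le

theorem sUOp_eq_particleHoleConj {R : Type*} [CommRing R] {n k : ℕ} [NeZero (n + k)] (q : R)
    {lam : Fin k → ℕ} (hlam : Antitone lam) (hn : ∀ i, lam i ≤ n) :
    sUOp R (n + k) q lam = particleHoleConj R (n + k) (sUOp R (n + k) q (transpGen lam n)) := by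
  have ha : padded (transpGen lam n) 0 ≤ k := padded_zero_le (transpGen_le n)
  have hb : padded lam 0 ≤ n := padded_zero_le hn
  have hrows (i : Fin k) (hi : 0 < lam i) : (i : ℕ) < padded (transpGen lam n) 0 := by
    have hn₀ : 0 < n := hi.trans_le (hn i)
    rw [padded, dif_pos hn₀]
    exact (lt_transpGen_iff n hlam (j := ⟨0, hn₀⟩)).mpr hi
  have hpair : WronskiPair (padded (transpGen lam n) 0 + padded lam 0)
      (cyclicE (uOp R (n + k) q)) (cyclicH (uOp R (n + k) q)) :=
    (farCommute_uOp.wronskiPair uOp_mul_self).mono (by omega)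
  have hdual := hpair.ncDet_transpGen commute_cyclicE_uOp
    (hlam.comp_monotone (Fin.strictMono_castLE ha).monotone) fun i => le_padded_zero hlam _
  simp only [transpGen_comp_castLE _ ha hrows] at hdual
  simp only [sUOp, eUInt_eq_cyclicE, map_ncDet, particleHoleConj_cyclicE, hdual,
    transpGen_transpGen n hlam ha (hn _), Function.comp_apply]

theorem level_rank_duality_general {R : Type*} [CommRing R] (q : R) (n k : ℕ) [NeZero (n + k)]
    (lam mu rho : PartBox k n) :
    pairW (Finsupp.single (wordOf (n + k) k (partVal rho)) 1)
        (sUOp R (n + k) q (partVal lam)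
          (Finsupp.single (wordOf (n + k) k (partVal mu)) 1)) =
      pairW (Finsupp.single (wordOf (n + k) n (transpGen (partVal rho) n)) 1)
        (sUOp R (n + k) q (transpGen (partVal lam) n)
          (Finsupp.single (wordOf (n + k) n (transpGen (partVal mu) n)) 1)) := by
  rw [pairW_single_one, pairW_single_one,
    sUOp_eq_particleHoleConj q (antitone_partVal lam) (partVal_le lam),
    particleHoleConj_apply_single,
    particleHole_wordOf (antitone_partVal mu) (partVal_le mu),
    particleHole_wordOf (antitone_partVal rho) (partVal_le rho)]

/-- Level-rank duality: for `λ, μ, ρ ∈ 𝔓_{≤k,n}`,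
`⟨w(ρ), s_λ(𝒰)·w(μ)⟩_{F_k} = ⟨w(ρ^t), s_{λ^t}(𝒰)·w(μ^t)⟩_{F_n}` in `ℂ[q]`. -/
theorem level_rank_duality (n k : ℕ) (hn : 1 ≤ n) (hk : 1 ≤ k) [NeZero (n + k)]
    (hN : 3 ≤ n + k) (lam mu rho : PartBox k n) :
    pairW (Finsupp.single (wordOf (n + k) k (partVal rho)) 1)
        (sUOp (Polynomial ℂ) (n + k) Polynomial.X (partVal lam)
          (Finsupp.single (wordOf (n + k) k (partVal mu)) 1)) =
      pairW (Finsupp.single (wordOf (n + k) n (transpGen (partVal rho) n)) 1)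
        (sUOp (Polynomial ℂ) (n + k) Polynomial.X (transpGen (partVal lam) n)
          (Finsupp.single (wordOf (n + k) n (transpGen (partVal mu) n)) 1)) :=
  level_rank_duality_general Polynomial.X n k lam mu rho
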